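/- arXiv:math/9908005 — 3 statements merged into one kernel-verified Lean document; each statement's English description precedes it below -/
import Mathlib

section
/- For all m ≥ 1 and n ≥ 1, the sum over all m-multipartitions λ of n of the square of the number of standard tableaux of shape λ equals m^n · n!. -/
noncomputable section
open scoped Classical
open scoped Fin.NatCast

namespace Cyclo

/-- The defining relations of the cyclotomic Hecke algebra of type `G(m,1,n)`.
Generator `i : Fin n` corresponds to `a_{i+1}` of the paper. -/
inductive Rel (k : Type) [Field k] (m n : ℕ) (v : Fin m → k) (q : k) :
    FreeAlgebra k (Fin n) → FreeAlgebra k (Fin n) → Prop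
  | cyclo (i : Fin n) (hi : i.1 = 0) :
      Rel k m n v q
        ((List.ofFn fun j : Fin m =>
          (FreeAlgebra.ι k i - algebraMap k (FreeAlgebra k (Fin n)) (v j))).prod) 0
  | quad (i : Fin n) (hi : 1 ≤ i.1) :
      Rel k m n v q
        ((FreeAlgebra.ι k i - algebraMap k (FreeAlgebra k (Fin n)) q) * (FreeAlgebra.ι k i + 1)) 0
  | braid0 (i j : Fin n) (hi : i.1 = 0) (hj : j.1 = 1) :
      Rel k m n v q
        (FreeAlgebra.ι k i * FreeAlgebra.ι k j * FreeAlgebra.ι k i * FreeAlgebra.ι k j)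
        (FreeAlgebra.ι k j * FreeAlgebra.ι k i * FreeAlgebra.ι k j * FreeAlgebra.ι k i)
  | comm (i j : Fin n) (h : i.1 + 2 ≤ j.1) :
      Rel k m n v q (FreeAlgebra.ι k i * FreeAlgebra.ι k j)
        (FreeAlgebra.ι k j * FreeAlgebra.ι k i)
  | braid (i j : Fin n) (hi : 1 ≤ i.1) (hj : j.1 = i.1 + 1) :
      Rel k m n v q
        (FreeAlgebra.ι k j * FreeAlgebra.ι k i * FreeAlgebra.ι k j)
        (FreeAlgebra.ι k i * FreeAlgebra.ι k j * FreeAlgebra.ι k i)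

/-- The cyclotomic Hecke algebra `H_n(v_1,…,v_m;q)` of type `G(m,1,n)`. -/
def CH (k : Type) [Field k] (m n : ℕ) (v : Fin m → k) (q : k) : Type :=
  RingQuot (Rel k m n v q)

instance (k : Type) [Field k] (m n : ℕ) (v : Fin m → k) (q : k) : Ring (CH k m n v q) :=
  inferInstanceAs (Ring (RingQuot (Rel k m n v q)))

instance (k : Type) [Field k] (m n : ℕ) (v : Fin m → k) (q : k) : Algebra k (CH k m n v q) :=
  inferInstanceAs (Algebra k (RingQuot (Rel k m n v q)))

variable (k : Type) [Field k] (m n : ℕ) (v : Fin m → k) (q : k)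

/-- `gen k m n v q t` is the generator `a_{t+1}` (so `gen 0 = a_1`, …, `gen (n-1) = a_n`). -/
def gen [NeZero n] (t : ℕ) : CH k m n v q :=
  RingQuot.mkAlgHom k (Rel k m n v q) (FreeAlgebra.ι k ((t : Fin n)))

/-- `murphyAux k m n v q t` is the Murphy element `L_{t+1}`. -/
def murphyAux [NeZero n] : ℕ → CH k m n v q
  | 0 => gen k m n v q 0
  | t + 1 => q⁻¹ • (gen k m n v q (t + 1) * murphyAux t * gen k m n v q (t + 1))

/-- The Murphy element `L_{i+1}`, for `i : Fin n`. -/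
def murphy [NeZero n] (i : Fin n) : CH k m n v q := murphyAux k m n v q i.1

/-- The product of adjacent transpositions encoded by a list of `0`-based indices:
`t` encodes the transposition `(t, t+1)` (in `0`-based labels), i.e. `s_{t+1}` of the paper. -/
def swapProd [NeZero n] (l : List ℕ) : Equiv.Perm (Fin n) :=
  (l.map fun t => Equiv.swap ((t : Fin n)) (((t + 1 : ℕ) : Fin n))).prod

/-- The corresponding product of generators of the Hecke algebra: the index `t`
(encoding `s_{t+1}`) contributes the generator `a_{t+2} = gen (t+1)`. -/
def genProd [NeZero n] (l : List ℕ) : CH k m n v q :=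
  (l.map fun t => gen k m n v q (t + 1)).prod

/-- `l` is a reduced word for the permutation `w`. -/
def IsReducedWord [NeZero n] (l : List ℕ) (w : Equiv.Perm (Fin n)) : Prop :=
  (∀ t ∈ l, t + 1 < n) ∧ swapProd n l = w ∧
    ∀ l' : List ℕ, (∀ t ∈ l', t + 1 < n) → swapProd n l' = w → l.length ≤ l'.length

/-- `aw` assigns to each permutation `w` the element `a_w` computed from a(ny) reduced word. -/
def IsAW [NeZero n] (aw : Equiv.Perm (Fin n) → CH k m n v q) : Prop :=
  ∀ (w : Equiv.Perm (Fin n)) (l : List ℕ), IsReducedWord n l w → aw w = genProd k m n v q l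



/-- An `m`-multipartition of `n`:  `part c` is the partition `λ^{(c+1)}`
(so `c = m-1` corresponds to the component `λ^{(m)}` of the paper), given by its
(weakly decreasing) list of row lengths `part c 0, part c 1, …`. -/
structure Multipartition (m n : ℕ) where
  part : Fin m → ℕ → ℕ
  mono : ∀ c i, part c (i + 1) ≤ part c i
  bound : ∀ c i, n ≤ i → part c i = 0
  total : (∑ c : Fin m, ∑ i ∈ Finset.range n, part c i) = n

namespace Multipartition

variable {m n : ℕ}

/-- The size `|λ^{(c+1)}|` of a component. -/
def compSize (Λ : Multipartition m n) (c : Fin m) : ℕ :=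
  ∑ i ∈ Finset.range n, Λ.part c i

/-- `|λ^{(1)}| + ⋯ + |λ^{(kk)}|`. -/
def compSizeUpto (Λ : Multipartition m n) (kk : ℕ) : ℕ :=
  ∑ c ∈ Finset.range kk, (if h : c < m then Λ.compSize ⟨c, h⟩ else 0)

/-- The statistic `Σ_{j>k}|λ^{(j)}| + Σ_{j=1}^{l} λ^{(k)}_j` of the dominance order,
where the component `k` (`1`-based) is `c.1 + 1`. -/
def domStat (Λ : Multipartition m n) (c : Fin m) (l : ℕ) : ℕ :=
  (∑ c' ∈ Finset.univ.filter (fun c' : Fin m => c.1 < c'.1), Λ.compSize c') +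
    ∑ j ∈ Finset.range l, Λ.part c j

/-- The dominance order `Λ ⊵ M`. -/
def Dominates (Λ M : Multipartition m n) : Prop :=
  ∀ (c : Fin m) (l : ℕ), M.domStat c l ≤ Λ.domStat c l

/-- Strict dominance `Λ ▷ M`. -/
def StrictDom (Λ M : Multipartition m n) : Prop :=
  Λ.Dominates M ∧ Λ ≠ M

/-- The (0-based) entry of the canonical tableau `t^Λ` in the box in row `i`, column `j`
of component `c`: the boxes are filled row by row, starting with the rows of `λ^{(m)}`,
then those of `λ^{(m-1)}`, and so on. -/
def canonEntry (Λ : Multipartition m n) (c : Fin m) (i j : ℕ) : ℕ :=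
  (∑ c' ∈ Finset.univ.filter (fun c' : Fin m => c.1 < c'.1), Λ.compSize c') +
    (∑ i' ∈ Finset.range i, Λ.part c i') + j

end Multipartition

/-- A standard tableau of shape `Λ`, with (0-based) entries `0, …, n-1`:
`entry c i j` is the entry in the box in row `i`, column `j` of component `c`
(and is normalised to `0` outside the boxes of `Λ`). -/
structure StdTableau {m n : ℕ} (Λ : Multipartition m n) where
  entry : Fin m → ℕ → ℕ → ℕ
  lt_n : ∀ c i j, j < Λ.part c i → entry c i j < n
  inj : ∀ c i j c' i' j', j < Λ.part c i → j' < Λ.part c' i' →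
    entry c i j = entry c' i' j' → (c, i, j) = (c', i', j')
  surj : ∀ x, x < n → ∃ c i j, j < Λ.part c i ∧ entry c i j = x
  row : ∀ c i j, j + 1 < Λ.part c i → entry c i j < entry c i (j + 1)
  col : ∀ c i j, j < Λ.part c (i + 1) → entry c i j < entry c (i + 1) j
  outside : ∀ c i j, ¬ j < Λ.part c i → entry c i j = 0

variable (k : Type) [Field k] (m n : ℕ)

/-- `d` assigns to each standard tableau `T` of each shape `Λ` the permutation `d(T)`
sending, box by box, the entry of the canonical tableau `t^Λ` to the entry of `T`. -/
def IsD [NeZero n] (d : ∀ Λ : Multipartition m n, StdTableau Λ → Equiv.Perm (Fin n)) : Prop :=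
  ∀ (Λ : Multipartition m n) (T : StdTableau Λ) (c : Fin m) (i j : ℕ), j < Λ.part c i →
    d Λ T ((Λ.canonEntry c i j : ℕ) : Fin n) = ((T.entry c i j : ℕ) : Fin n)

/-- Membership in the row stabiliser `S_Λ` of the canonical tableau `t^Λ`. -/
def InRowStab [NeZero n] (Λ : Multipartition m n) (w : Equiv.Perm (Fin n)) : Prop :=
  ∀ (c : Fin m) (i j : ℕ), j < Λ.part c i →
    ∃ j', j' < Λ.part c i ∧
      w ((Λ.canonEntry c i j : ℕ) : Fin n) = ((Λ.canonEntry c i j' : ℕ) : Fin n)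


variable (k : Type) [Field k] (m n : ℕ) (v : Fin m → k) (q : k)

open Multipartition

/-- The element `x_Λ = Σ_{w ∈ S_Λ} a_w`, where `aw` computes the elements `a_w`. -/
def xlam [NeZero n] (aw : Equiv.Perm (Fin n) → CH k m n v q) (Λ : Multipartition m n) :
    CH k m n v q :=
  ∑ w : Equiv.Perm (Fin n), if InRowStab m n Λ w then aw w else 0

/-- `a_kk = n − |λ^{(1)}| − ⋯ − |λ^{(kk)}|`. -/
def aVal (Λ : Multipartition m n) (kk : ℕ) : ℕ := n - Λ.compSizeUpto kk

/-- The element `u_a = ∏_{kk} (L_1 − v_kk)(L_2 − v_kk)⋯(L_{a_kk} − v_kk)`. -/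
def ua [NeZero n] (Λ : Multipartition m n) : CH k m n v q :=
  (List.ofFn fun kk : Fin m =>
    (List.ofFn fun ii : Fin n =>
      if ii.1 < aVal m n Λ (kk.1 + 1) then
        murphy k m n v q ii - algebraMap k (CH k m n v q) (v kk)
      else 1).prod).prod

/-- The element `m_Λ = x_Λ u_a`. -/
def mlam [NeZero n] (aw : Equiv.Perm (Fin n) → CH k m n v q) (Λ : Multipartition m n) :
    CH k m n v q :=
  xlam k m n v q aw Λ * ua k m n v q Λ

/-- The element `m_{st} = a_{d(s)}^* ⬝ m_Λ ⬝ a_{d(t)}`;  here `aw` computes the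
elements `a_w`, `σ` is the `*` anti-involution and `d` computes the permutations `d(t)`. -/
def mst [NeZero n] (aw : Equiv.Perm (Fin n) → CH k m n v q) (σ : CH k m n v q →ₗ[k] CH k m n v q)
    (d : ∀ Λ : Multipartition m n, StdTableau Λ → Equiv.Perm (Fin n))
    {Λ : Multipartition m n} (s t : StdTableau Λ) : CH k m n v q :=
  σ (aw (d Λ s)) * mlam k m n v q aw Λ * aw (d Λ t)

/-- `σ` is the `*` anti-involution: the `k`-linear anti-automorphism fixing the generators. -/
def IsStar [NeZero n] (σ : CH k m n v q →ₗ[k] CH k m n v q) : Prop :=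
  σ 1 = 1 ∧ (∀ x y, σ (x * y) = σ y * σ x) ∧ ∀ t, t < n → σ (gen k m n v q t) = gen k m n v q t

/-- The set of elements `m_{uv}`, for `u, v` standard tableaux of a common shape `M ▷ Λ`. -/
def IsetSet [NeZero n] (aw : Equiv.Perm (Fin n) → CH k m n v q)
    (σ : CH k m n v q →ₗ[k] CH k m n v q)
    (d : ∀ Λ : Multipartition m n, StdTableau Λ → Equiv.Perm (Fin n))
    (Λ : Multipartition m n) : Set (CH k m n v q) :=
  {x | ∃ (M : Multipartition m n) (_ : M.StrictDom Λ) (u v' : StdTableau M),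
    x = mst k m n v q aw σ d u v'}

/-- `I_Λ`, the `k`-span of the `m_{uv}` with shape strictly dominating `Λ`. -/
def Ilam [NeZero n] (aw : Equiv.Perm (Fin n) → CH k m n v q)
    (σ : CH k m n v q →ₗ[k] CH k m n v q)
    (d : ∀ Λ : Multipartition m n, StdTableau Λ → Equiv.Perm (Fin n))
    (Λ : Multipartition m n) : Submodule k (CH k m n v q) :=
  Submodule.span k (IsetSet k m n v q aw σ d Λ)

/-- The image `z_Λ h` of `m_Λ h` in the quotient `H_n / I_Λ`. -/
def zh [NeZero n] (aw : Equiv.Perm (Fin n) → CH k m n v q)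
    (σ : CH k m n v q →ₗ[k] CH k m n v q)
    (d : ∀ Λ : Multipartition m n, StdTableau Λ → Equiv.Perm (Fin n))
    (Λ : Multipartition m n) (h : CH k m n v q) :
    CH k m n v q ⧸ Ilam k m n v q aw σ d Λ :=
  Submodule.Quotient.mk (mlam k m n v q aw Λ * h)

/-- The Specht module `S^Λ = z_Λ ⬝ (H_n/I_Λ)`, as a `k`-submodule of `H_n / I_Λ`. -/
def Specht [NeZero n] (aw : Equiv.Perm (Fin n) → CH k m n v q)
    (σ : CH k m n v q →ₗ[k] CH k m n v q)
    (d : ∀ Λ : Multipartition m n, StdTableau Λ → Equiv.Perm (Fin n))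
    (Λ : Multipartition m n) :
    Submodule k (CH k m n v q ⧸ Ilam k m n v q aw σ d Λ) :=
  Submodule.span k (Set.range (zh k m n v q aw σ d Λ))

/-- The generator `z_Λ h` as an element of the Specht module. -/
def zhS [NeZero n] (aw : Equiv.Perm (Fin n) → CH k m n v q)
    (σ : CH k m n v q →ₗ[k] CH k m n v q)
    (d : ∀ Λ : Multipartition m n, StdTableau Λ → Equiv.Perm (Fin n))
    (Λ : Multipartition m n) (h : CH k m n v q) :
    Specht k m n v q aw σ d Λ :=
  ⟨zh k m n v q aw σ d Λ h, Submodule.subset_span ⟨h, rfl⟩⟩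

/-!
This is Stanley's argument for differential posets. A multipartition is a finite order ideal in the
disjoint union of `m` copies of the quadrant `ℕ × ℕ`, and a standard tableau is a linear extension
of that ideal. In a single quadrant every ideal has one more addable than removable element, so in
the disjoint union it has `m` more. Since adding and deleting distinct elements commute, the up and
down operators satisfy `DU = UD + m`. The numbers `f I` of linear extensions satisfy `D f = f` by
deleting the element with the largest label, and induction on the size of `I` then gives
`∑ f (I ∪ {x}) = m (|I| + 1) f I`, the sum being over the addable `x`. Counting the pairs
`I ⊂ J` with `|I| = n` and `|J| = n + 1`, each with weight `f I * f J`, in two ways turns this into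
`∑_{|J| = n + 1} f(J)² = m (n + 1) ∑_{|I| = n} f(I)²`.
-/

open scoped Finset

section OrderIdeals

variable {P : Type*} [PartialOrder P] {I : Finset P} {x : P}

/-- The elements that can be deleted from a finite order ideal `I`: its maximal elements. -/
def removable (I : Finset P) : Finset P := {x ∈ I | Maximal (· ∈ I) x}

lemma mem_removable : x ∈ removable I ↔ x ∈ I ∧ ∀ y ∈ I, ¬ x < y := by
  simp only [removable, Finset.mem_filter, maximal_iff_forall_gt]
  grind

lemma removable_nonempty (hI : I.Nonempty) : (removable I).Nonempty := by
  obtain ⟨x, hx⟩ := I.exists_maximal hI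
  exact ⟨x, by simpa [removable] using ⟨hx.prop, hx⟩⟩

lemma isLowerSet_erase (hI : IsLowerSet (I : Set P)) (hx : x ∈ removable I) :
    IsLowerSet (I.erase x : Set P) := by
  intro y z hzy hy
  have := hI hzy
  grind [mem_removable, lt_iff_le_and_ne]

variable [WellQuasiOrderedLE P]

/-- The elements that can be added to a finite order ideal `I`: the minimal elements of its
complement. They form an antichain, so well-quasi-orderedness makes them finite in number. -/
def addable (I : Finset P) : Finset P :=
  (WellQuasiOrderedLE.finite_of_isAntichain (setOfPred_minimal_antichain (· ∉ I))).toFinset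

lemma mem_addable : x ∈ addable I ↔ x ∉ I ∧ ∀ y < x, y ∈ I := by
  simp [addable, minimal_iff_forall_lt]

lemma isLowerSet_insert (hI : IsLowerSet (I : Set P)) (hx : x ∈ addable I) :
    IsLowerSet ((insert x I : Finset P) : Set P) := by
  intro y z hzy hy
  have := hI hzy
  grind [mem_addable, lt_iff_le_and_ne]

lemma mem_removable_insert (hI : IsLowerSet (I : Set P)) (hx : x ∈ addable I) :
    x ∈ removable (insert x I) := by
  have hmax (y) (hy : y ∈ I) : ¬ x < y := fun hxy ↦ (mem_addable.1 hx).1 (hI hxy.le hy)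
  grind [mem_removable]

lemma mem_addable_erase (hI : IsLowerSet (I : Set P)) (hx : x ∈ removable I) :
    x ∈ addable (I.erase x) := by
  have hmin (y) (hy : y < x) : y ∈ I := hI hy.le (mem_removable.1 hx).1
  grind [mem_addable]

-- Adding `x` and deleting `y ≠ x` commute: both sides say that `x` is addable to `I`, that `y` is
-- removable from `I`, and that `y < x` fails.
lemma mem_addable_and_mem_removable_insert_iff {y : P} :
    x ∈ addable I ∧ y ∈ (removable (insert x I)).erase x ↔
      x ∈ (addable (I.erase y)).erase y ∧ y ∈ removable I := by
  grind [mem_addable, mem_removable]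

/-- The finite order ideals of `P` form an `r`-differential poset in Stanley's sense: each has `r`
more upper than lower covers. Stanley's other axiom, that two distinct ideals have as many common
upper as common lower covers, is automatic, since order ideals form a distributive lattice. -/
def IsDifferential (P : Type*) [PartialOrder P] [WellQuasiOrderedLE P] (r : ℕ) : Prop :=
  ∀ I : Finset P, IsLowerSet (I : Set P) → #(addable I) = #(removable I) + r

-- The relation `DU = UD + r` between the up and down operators.
lemma IsDifferential.sum_addable_sum_removable {r : ℕ} (hP : IsDifferential P r)
    (hI : IsLowerSet (I : Set P)) {M : Type*} [AddCommMonoid M] (f : Finset P → M) :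
    ∑ x ∈ addable I, ∑ y ∈ removable (insert x I), f ((insert x I).erase y) =
      r • f I + ∑ y ∈ removable I, ∑ x ∈ addable (I.erase y), f (insert x (I.erase y)) := by
  have split_insert : ∀ x ∈ addable I, ∑ y ∈ removable (insert x I), f ((insert x I).erase y) =
      f I + ∑ y ∈ (removable (insert x I)).erase x, f ((insert x I).erase y) := fun x hx ↦ by
    rw [← Finset.add_sum_erase _ _ (mem_removable_insert hI hx),
      Finset.erase_insert (mem_addable.1 hx).1]
  have split_erase : ∀ y ∈ removable I, ∑ x ∈ addable (I.erase y), f (insert x (I.erase y)) =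
      f I + ∑ x ∈ (addable (I.erase y)).erase y, f ((insert x I).erase y) := fun y hy ↦ by
    rw [← Finset.add_sum_erase _ _ (mem_addable_erase hI hy),
      Finset.insert_erase (mem_removable.1 hy).1]
    congr 1
    refine Finset.sum_congr rfl fun x hx ↦ ?_
    rw [Finset.erase_insert_of_ne (Finset.ne_of_mem_erase hx)]
  rw [Finset.sum_congr rfl split_insert, Finset.sum_congr rfl split_erase,
    Finset.sum_add_distrib, Finset.sum_add_distrib, Finset.sum_const, Finset.sum_const, hP I hI,
    Finset.sum_comm' fun _ _ ↦ mem_addable_and_mem_removable_insert_iff, add_smul]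
  abel

variable (P) in
lemma finite_setOf_isLowerSet_card_eq (n : ℕ) :
    {I : Finset P | IsLowerSet (I : Set P) ∧ #I = n}.Finite := by
  induction n with
  | zero => exact (Set.finite_singleton ∅).subset fun I hI ↦ Finset.card_eq_zero.1 hI.2
  | succ n ih =>
    refine (ih.biUnion fun I _ ↦ ((addable I).image (insert · I)).finite_toSet).subset ?_
    rintro I ⟨hI, hcard⟩
    have hne : I.Nonempty := Finset.card_pos.1 (by lia)
    obtain ⟨x, hx⟩ := removable_nonempty hne
    have hxI := (mem_removable.1 hx).1
    simp only [Set.mem_iUnion, Finset.coe_image, Set.mem_image]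
    exact ⟨I.erase x, ⟨isLowerSet_erase hI hx, by simp [hxI, hcard]⟩, x,
      mem_addable_erase hI hx, Finset.insert_erase hxI⟩

variable (P) in
/-- The order ideals of `P` with exactly `n` elements. -/
def orderIdeals (n : ℕ) : Finset (Finset P) :=
  (finite_setOf_isLowerSet_card_eq P n).toFinset

lemma mem_orderIdeals {n : ℕ} : I ∈ orderIdeals P n ↔ IsLowerSet (I : Set P) ∧ #I = n := by
  simp [orderIdeals]

lemma orderIdeals_zero : orderIdeals P 0 = {∅} := by
  ext I
  simp only [mem_orderIdeals, Finset.card_eq_zero, Finset.mem_singleton, and_iff_right_iff_imp]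
  rintro rfl
  simpa using isLowerSet_empty

lemma sum_orderIdeals_succ_sum_removable {M : Type*} [AddCommMonoid M] (n : ℕ)
    (F : Finset P → Finset P → M) :
    ∑ J ∈ orderIdeals P (n + 1), ∑ x ∈ removable J, F J (J.erase x) =
      ∑ I ∈ orderIdeals P n, ∑ x ∈ addable I, F (insert x I) I := by
  rw [Finset.sum_sigma', Finset.sum_sigma']
  refine Finset.sum_bij' (fun p _ ↦ ⟨p.1.erase p.2, p.2⟩) (fun p _ ↦ ⟨insert p.2 p.1, p.2⟩)
    ?_ ?_ ?_ ?_ ?_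
  all_goals
    rintro ⟨I, x⟩ h
    simp only [Finset.mem_sigma, mem_orderIdeals] at h ⊢
  · exact ⟨⟨isLowerSet_erase h.1.1 h.2, by grind [mem_removable]⟩, mem_addable_erase h.1.1 h.2⟩
  · exact ⟨⟨isLowerSet_insert h.1.1 h.2, by grind [mem_addable]⟩, mem_removable_insert h.1.1 h.2⟩
  · rw [Finset.insert_erase (mem_removable.1 h.2).1]
  · rw [Finset.erase_insert (mem_addable.1 h.2).1]
  · rw [Finset.insert_erase (mem_removable.1 h.2).1]

end OrderIdeals

section StdFilling

variable {P : Type*} [PartialOrder P]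

/-- `t` labels the elements of `I` bijectively and increasingly by `0, …, #I - 1`; it is normalised
to `0` outside `I`, so that distinct fillings of `I` are distinct functions. -/
structure IsStdFilling (I : Finset P) (t : P → ℕ) : Prop where
  bijOn : Set.BijOn t I (Set.Iio #I)
  strictMonoOn : StrictMonoOn t I
  eq_zero : ∀ x ∉ I, t x = 0

/-- The standard fillings of `I`, that is, the linear extensions of the order on `I`. -/
abbrev StdFilling (I : Finset P) : Type _ := {t : P → ℕ // IsStdFilling I t}

instance (I : Finset P) : Finite (StdFilling I) := by
  let toFun (t : StdFilling I) (x : I) : Fin #I := ⟨t.1 x, t.2.bijOn.mapsTo x.2⟩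
  refine Finite.of_injective toFun fun s t hst ↦ Subtype.ext (funext fun x ↦ ?_)
  by_cases hx : x ∈ I
  · exact congrArg Fin.val (congrFun hst ⟨x, hx⟩)
  · rw [s.2.eq_zero x hx, t.2.eq_zero x hx]

instance : Unique (StdFilling (∅ : Finset P)) where
  default := ⟨0, by simp, by simp [StrictMonoOn], by simp⟩
  uniq t := Subtype.ext (funext fun x ↦ t.2.eq_zero x (by simp))

variable {I : Finset P} {t : P → ℕ} {x : P}

lemma IsStdFilling.mem_removable_of_eq_card_erase (ht : IsStdFilling I t) (hx : x ∈ I)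
    (htx : t x = #(I.erase x)) : x ∈ removable I := by
  refine mem_removable.2 ⟨hx, fun y hy hxy ↦ ?_⟩
  have hlt : t x < t y := ht.strictMonoOn hx hy hxy
  have hty : t y < #I := ht.bijOn.mapsTo hy
  grind

lemma IsStdFilling.update_zero (ht : IsStdFilling I t) (hx : x ∈ I)
    (htx : t x = #(I.erase x)) : IsStdFilling (I.erase x) (Function.update t x 0) := by
  have hcard := Finset.card_erase_add_one hx
  have heq : Set.EqOn t (Function.update t x 0) (I.erase x : Finset P) := by
    intro y hy
    grind
  refine ⟨?_, ?_, ?_⟩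
  · refine Set.BijOn.congr ?_ heq
    have hlabels : Set.Iio #I \ {t x} = Set.Iio #(I.erase x) := by grind
    simpa only [hlabels, Finset.coe_erase] using ht.bijOn.sdiff_singleton hx
  · exact (ht.strictMonoOn.mono (by simp)).congr heq
  · grind [ht.eq_zero]

lemma IsStdFilling.update_card (hx : x ∈ removable I) (ht : IsStdFilling (I.erase x) t) :
    IsStdFilling I (Function.update t x #(I.erase x)) := by
  obtain ⟨hxI, hmax⟩ := mem_removable.1 hx
  have hcard := Finset.card_erase_add_one hxI
  have hlt : ∀ y ∈ I.erase x, t y < #(I.erase x) := fun y hy ↦ ht.bijOn.mapsTo hy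
  have heq : Set.EqOn t (Function.update t x #(I.erase x)) (I.erase x : Finset P) := by
    intro y hy
    grind
  refine ⟨?_, ?_, ?_⟩
  · have hlabels : insert #(I.erase x) (Set.Iio #(I.erase x)) = Set.Iio #I := by grind
    have hbij := (ht.bijOn.congr heq).insert (a := x) (by simp)
    rwa [Function.update_self, hlabels, ← Finset.coe_insert, Finset.insert_erase hxI] at hbij
  · intro y hy z hz hyz
    have := @ht.strictMonoOn y
    grind
  · grind [ht.eq_zero]

/-- The filling of `I` extending a filling of `I` without its maximal element `x` by giving `x` the
largest label. -/
def extendFilling (I : Finset P) (p : (x : removable I) × StdFilling (I.erase x.1)) :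
    StdFilling I :=
  ⟨Function.update p.2.1 p.1 #(I.erase p.1), p.2.2.update_card p.1.2⟩

lemma extendFilling_injective : Function.Injective (extendFilling I) := by
  rintro ⟨⟨x, hx⟩, s, hs⟩ ⟨⟨y, hy⟩, t, ht⟩ h
  have hst : Function.update s x #(I.erase x) = Function.update t y #(I.erase y) :=
    congrArg Subtype.val h
  have hxI := (mem_removable.1 hx).1
  have hyI := (mem_removable.1 hy).1
  obtain rfl : x = y := by
    refine (hs.update_card hx).bijOn.injOn hxI hyI ?_
    rw [hst, Function.update_self, ← hst]
    simp [Finset.card_erase_of_mem, hxI, hyI]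
  have hs_eq_t : s = t := by
    calc s = Function.update (Function.update s x #(I.erase x)) x 0 := by
          simp [← hs.eq_zero x (by simp)]
      _ = Function.update (Function.update t x #(I.erase x)) x 0 := by rw [hst]
      _ = t := by simp [← ht.eq_zero x (by simp)]
  subst hs_eq_t
  rfl

lemma extendFilling_surjective (hI : I.Nonempty) : Function.Surjective (extendFilling I) := by
  rintro ⟨t, ht⟩
  obtain ⟨x, hx, hlabel⟩ := ht.bijOn.surjOn (show #I - 1 < #I by grind)
  have htx : t x = #(I.erase x) := by grind
  refine ⟨⟨⟨x, ht.mem_removable_of_eq_card_erase hx htx⟩, ⟨_, ht.update_zero hx htx⟩⟩, ?_⟩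
  simp [extendFilling, ← htx]

lemma card_stdFilling (hI : I.Nonempty) :
    Nat.card (StdFilling I) = ∑ x ∈ removable I, Nat.card (StdFilling (I.erase x)) := by
  rw [← Nat.card_congr (Equiv.ofBijective _
      ⟨extendFilling_injective, extendFilling_surjective hI⟩), Nat.card_sigma]
  exact Finset.sum_coe_sort (removable I) fun x ↦ Nat.card (StdFilling (I.erase x))

variable [WellQuasiOrderedLE P] {r : ℕ}

lemma IsDifferential.sum_addable_card_stdFilling (hP : IsDifferential P r)
    (hI : IsLowerSet (I : Set P)) :
    ∑ x ∈ addable I, Nat.card (StdFilling (insert x I)) =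
      r * (#I + 1) * Nat.card (StdFilling I) := by
  induction I using Finset.strongInduction with | H I ih =>
  have sum_addable_erase : ∀ y ∈ removable I, ∑ x ∈ addable (I.erase y),
      Nat.card (StdFilling (insert x (I.erase y))) =
        r * #I * Nat.card (StdFilling (I.erase y)) := fun y hy ↦ by
    have hyI := (mem_removable.1 hy).1
    rw [ih _ (Finset.erase_ssubset hyI) (isLowerSet_erase hI hy), Finset.card_erase_add_one hyI]
  calc ∑ x ∈ addable I, Nat.card (StdFilling (insert x I))
    _ = ∑ x ∈ addable I, ∑ y ∈ removable (insert x I),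
          Nat.card (StdFilling ((insert x I).erase y)) :=
      Finset.sum_congr rfl fun x _ ↦ card_stdFilling (I.insert_nonempty x)
    _ = r * Nat.card (StdFilling I) +
          r * #I * ∑ y ∈ removable I, Nat.card (StdFilling (I.erase y)) := by
      rw [hP.sum_addable_sum_removable hI fun J ↦ Nat.card (StdFilling J),
        Finset.sum_congr rfl sum_addable_erase, Finset.mul_sum, smul_eq_mul]
    _ = r * (#I + 1) * Nat.card (StdFilling I) := by
      obtain rfl | hne := I.eq_empty_or_nonempty
      · simp
      · rw [← card_stdFilling hne]
        ring

theorem IsDifferential.sum_card_stdFilling_sq (hP : IsDifferential P r) (n : ℕ) :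
    ∑ I ∈ orderIdeals P n, Nat.card (StdFilling I) ^ 2 = r ^ n * n.factorial := by
  induction n with
  | zero => simp [orderIdeals_zero]
  | succ n ih =>
    calc ∑ J ∈ orderIdeals P (n + 1), Nat.card (StdFilling J) ^ 2
      _ = ∑ J ∈ orderIdeals P (n + 1), ∑ x ∈ removable J,
            Nat.card (StdFilling J) * Nat.card (StdFilling (J.erase x)) := by
        refine Finset.sum_congr rfl fun J hJ ↦ ?_
        have hne : J.Nonempty := Finset.card_pos.1 (by grind [mem_orderIdeals])
        rw [← Finset.mul_sum, ← card_stdFilling hne, sq]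
      _ = ∑ I ∈ orderIdeals P n, ∑ x ∈ addable I,
            Nat.card (StdFilling (insert x I)) * Nat.card (StdFilling I) :=
        sum_orderIdeals_succ_sum_removable n
          fun J I ↦ Nat.card (StdFilling J) * Nat.card (StdFilling I)
      _ = ∑ I ∈ orderIdeals P n, r * (n + 1) * Nat.card (StdFilling I) ^ 2 := by
        refine Finset.sum_congr rfl fun I hI ↦ ?_
        obtain ⟨hlower, rfl⟩ := mem_orderIdeals.1 hI
        rw [← Finset.sum_mul, hP.sum_addable_card_stdFilling hlower, mul_assoc, sq]
      _ = r ^ (n + 1) * (n + 1).factorial := by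
        rw [← Finset.mul_sum, ih, Nat.factorial_succ]
        ring

end StdFilling

section Sigma

variable {ι : Type*} {α : ι → Type*}

/-- The part of `I` lying in the `i`-th summand. -/
def fiber (I : Finset (Σ i, α i)) (i : ι) : Finset (α i) :=
  I.preimage (Sigma.mk i) sigma_mk_injective.injOn

lemma mem_fiber {I : Finset (Σ i, α i)} {i : ι} {a : α i} : a ∈ fiber I i ↔ ⟨i, a⟩ ∈ I := by
  simp [fiber]

lemma card_fiber_le (I : Finset (Σ i, α i)) (i : ι) : #(fiber I i) ≤ #I :=
  Finset.card_le_card_of_injOn (Sigma.mk i) (fun _ ↦ mem_fiber.1) sigma_mk_injective.injOn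

variable [∀ i, PartialOrder (α i)]

instance [Finite ι] [∀ i, WellQuasiOrderedLE (α i)] : WellQuasiOrderedLE (Σ i, α i) := by
  rw [wellQuasiOrderedLE_def]
  intro f
  obtain ⟨i, hi⟩ := Finite.exists_infinite_fiber fun k ↦ (f k).1
  let s : ℕ ↪o ℕ := Nat.orderEmbeddingOfSet ((fun k ↦ (f k).1) ⁻¹' {i})
  have hfs (k : ℕ) : ∃ a : α i, f (s k) = ⟨i, a⟩ := by
    have hk : (f (s k)).1 = i := (Nat.Subtype.ofNat ((fun k ↦ (f k).1) ⁻¹' {i}) k).2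
    exact ⟨hk ▸ (f (s k)).2, by grind⟩
  choose g hg using hfs
  obtain ⟨k, l, hkl, hle⟩ := wellQuasiOrdered_le g
  exact ⟨s k, s l, s.strictMono hkl, by simpa [hg] using hle⟩

lemma isLowerSet_fiber {I : Finset (Σ i, α i)} (hI : IsLowerSet (I : Set (Σ i, α i)))
    (i : ι) : IsLowerSet (fiber I i : Set (α i)) := by
  intro a b hba ha
  simp only [Finset.mem_coe, mem_fiber] at ha ⊢
  exact hI (Sigma.mk_le_mk_iff.2 hba) ha

variable [Fintype ι]

lemma removable_eq_sigma (I : Finset (Σ i, α i)) :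
    removable I = Finset.univ.sigma fun i ↦ removable (fiber I i) := by
  ext ⟨i, a⟩
  simp only [mem_removable, Finset.mem_sigma, Finset.mem_univ, true_and, mem_fiber,
    and_congr_right_iff]
  refine fun _ ↦ ⟨fun h b hb hab ↦ h ⟨i, b⟩ hb (Sigma.mk_lt_mk_iff.2 hab), ?_⟩
  rintro h _ hb ⟨_, _, b, hab⟩
  exact h b hb hab

variable [∀ i, WellQuasiOrderedLE (α i)]

lemma addable_eq_sigma (I : Finset (Σ i, α i)) :
    addable I = Finset.univ.sigma fun i ↦ addable (fiber I i) := by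
  ext ⟨i, a⟩
  simp only [mem_addable, Finset.mem_sigma, Finset.mem_univ, true_and, mem_fiber,
    and_congr_right_iff]
  refine fun _ ↦ ⟨fun h b hba ↦ h ⟨i, b⟩ (Sigma.mk_lt_mk_iff.2 hba), ?_⟩
  rintro h _ ⟨_, b, _, hba⟩
  exact h b hba

lemma IsDifferential.sigma {r : ι → ℕ} (hα : ∀ i, IsDifferential (α i) (r i)) :
    IsDifferential (Σ i, α i) (∑ i, r i) := by
  intro I hI
  rw [addable_eq_sigma, removable_eq_sigma, Finset.card_sigma, Finset.card_sigma,
    ← Finset.sum_add_distrib]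
  exact Finset.sum_congr rfl fun i _ ↦ hα i _ (isLowerSet_fiber hI i)

end Sigma

section YoungLattice

variable {μ : YoungDiagram} {i j : ℕ}

lemma rowLen_eq_zero_of_card_le (h : μ.card ≤ i) : μ.rowLen i = 0 := by
  by_contra hpos
  have hmem : (i, 0) ∈ μ := YoungDiagram.mem_iff_lt_rowLen.2 (Nat.pos_of_ne_zero hpos)
  have hlt : i < #(μ.col 0) := μ.colLen_eq_card ▸ YoungDiagram.mem_iff_lt_colLen.1 hmem
  have hle : #(μ.col 0) ≤ μ.card := Finset.card_filter_le _ _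
  lia

lemma mem_removable_cells :
    (i, j) ∈ removable μ.cells ↔ j + 1 = μ.rowLen i ∧ μ.rowLen (i + 1) < μ.rowLen i := by
  simp only [mem_removable, YoungDiagram.mem_cells, Prod.forall, YoungDiagram.mem_iff_lt_rowLen]
  constructor
  · rintro ⟨hj, hmax⟩
    have hright := hmax i (j + 1)
    have hdown := hmax (i + 1) j
    simp only [Prod.mk_lt_mk] at hright hdown
    lia
  · rintro ⟨hj, hdrop⟩
    refine ⟨by lia, fun i' j' hj' hlt ↦ ?_⟩
    have := μ.rowLen_anti i i'
    have := μ.rowLen_anti (i + 1) i'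
    simp only [Prod.mk_lt_mk] at hlt
    lia

lemma mem_addable_cells :
    (i, j) ∈ addable μ.cells ↔ j = μ.rowLen i ∧ ∀ i' < i, μ.rowLen i < μ.rowLen i' := by
  simp only [mem_addable, YoungDiagram.mem_cells, Prod.forall, YoungDiagram.mem_iff_lt_rowLen]
  constructor
  · rintro ⟨hnotMem, hmin⟩
    have hj : j = μ.rowLen i := by
      have hleft := hmin i (j - 1)
      simp only [Prod.mk_lt_mk] at hleft
      lia
    exact ⟨hj, fun i' hi' ↦ hj ▸ hmin i' j (by simp [hi'])⟩
  · rintro ⟨rfl, hdrop⟩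
    refine ⟨lt_irrefl _, fun i' j' hlt ↦ ?_⟩
    have := hdrop i'
    simp only [Prod.mk_lt_mk] at hlt
    obtain rfl | hne := eq_or_ne i' i <;> lia

lemma addable_cells (μ : YoungDiagram) :
    addable μ.cells = insert (0, μ.rowLen 0)
      ((removable μ.cells).image fun x ↦ (x.1 + 1, μ.rowLen (x.1 + 1))) := by
  ext ⟨i, j⟩
  simp only [Finset.mem_insert, Finset.mem_image, Prod.exists, mem_removable_cells,
    mem_addable_cells, Prod.mk.injEq]
  cases i with
  | zero => simp
  | succ i =>
    have hanti := fun i' ↦ μ.rowLen_anti i' i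
    constructor
    · rintro ⟨rfl, h⟩
      have := h i
      exact .inr ⟨i, μ.rowLen i - 1, by grind⟩
    · grind

lemma isDifferential_nat_prod_nat : IsDifferential (ℕ × ℕ) 1 := by
  intro I hI
  let μ : YoungDiagram := ⟨I, hI⟩
  change #(addable μ.cells) = #(removable μ.cells) + 1
  rw [addable_cells, Finset.card_insert_of_notMem (by simp), Finset.card_image_of_injOn]
  rintro ⟨i, j⟩ hx ⟨i', j'⟩ hy h
  simp only [Finset.mem_coe, mem_removable_cells] at hx hy
  grind

end YoungLattice

section Multipartition

variable {m n : ℕ}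

/-- The boxes of all `m`-multipartitions, `⟨c, i, j⟩` being the box in row `i` and column `j` of
component `c`. Boxes in different components are incomparable. -/
abbrev Box (m : ℕ) : Type := Σ _ : Fin m, ℕ × ℕ

/-- The boxes in the first `n` rows of `m` left-justified shapes with row lengths `p`. -/
def boxes (n : ℕ) (p : Fin m → ℕ → ℕ) : Finset (Box m) :=
  Finset.univ.sigma fun c ↦ (Finset.range n).sigma (fun i ↦ Finset.range (p c i)) |>.map
    (Equiv.sigmaEquivProd ℕ ℕ).toEmbedding

lemma mem_boxes {p : Fin m → ℕ → ℕ} {c : Fin m} {i j : ℕ} :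
    ⟨c, i, j⟩ ∈ boxes n p ↔ i < n ∧ j < p c i := by
  simp [boxes]

lemma card_boxes (p : Fin m → ℕ → ℕ) : #(boxes n p) = ∑ c, ∑ i ∈ Finset.range n, p c i := by
  simp [boxes]

lemma Multipartition.mem_boxes_part (Λ : Multipartition m n) {c : Fin m} {i j : ℕ} :
    ⟨c, i, j⟩ ∈ boxes n Λ.part ↔ j < Λ.part c i := by
  have := Λ.bound c i
  rw [mem_boxes]
  lia

lemma Multipartition.card_boxes_part (Λ : Multipartition m n) : #(boxes n Λ.part) = n :=
  (card_boxes _).trans Λ.total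

lemma Multipartition.part_injective :
    Function.Injective (part : Multipartition m n → Fin m → ℕ → ℕ) := by
  rintro ⟨_, _⟩ ⟨_, _⟩ rfl
  rfl

lemma Multipartition.part_anti (Λ : Multipartition m n) (c : Fin m) : Antitone (Λ.part c) :=
  antitone_nat_of_succ_le (Λ.mono c)

lemma Multipartition.boxes_part_mem_orderIdeals (Λ : Multipartition m n) :
    boxes n Λ.part ∈ orderIdeals (Box m) n := by
  refine mem_orderIdeals.2 ⟨?_, Λ.card_boxes_part⟩
  rintro _ _ ⟨c, ⟨i', j'⟩, ⟨i, j⟩, hle⟩ hbox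
  simp only [Finset.mem_coe, mem_boxes_part, Prod.mk_le_mk] at hle hbox ⊢
  have := Λ.part_anti c hle.1
  lia

/-- The `c`-th component of an order ideal of boxes. -/
def component {I : Finset (Box m)} (hI : IsLowerSet (I : Set (Box m))) (c : Fin m) :
    YoungDiagram :=
  ⟨fiber I c, isLowerSet_fiber hI c⟩

lemma lt_rowLen_component {I : Finset (Box m)} {hI : IsLowerSet (I : Set (Box m))} {c : Fin m}
    {i j : ℕ} : j < (component hI c).rowLen i ↔ ⟨c, i, j⟩ ∈ I := by
  rw [← YoungDiagram.mem_iff_lt_rowLen, component, YoungDiagram.mem_mk, mem_fiber]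

lemma boxes_rowLen_component {I : Finset (Box m)} (hI : IsLowerSet (I : Set (Box m)))
    (hcard : #I ≤ n) : boxes n (fun c ↦ (component hI c).rowLen) = I := by
  ext ⟨c, i, j⟩
  rw [mem_boxes, lt_rowLen_component, and_iff_right_iff_imp]
  intro hmem
  by_contra hi
  have : (component hI c).rowLen i = 0 :=
    rowLen_eq_zero_of_card_le (((card_fiber_le I c).trans hcard).trans (not_lt.1 hi))
  have := (lt_rowLen_component (hI := hI)).2 hmem
  lia

/-- A multipartition is determined by its set of boxes, which can be any order ideal. -/
def multipartitionEquiv (m n : ℕ) : Multipartition m n ≃ orderIdeals (Box m) n where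
  toFun Λ := ⟨boxes n Λ.part, Λ.boxes_part_mem_orderIdeals⟩
  invFun I :=
    have hI := mem_orderIdeals.1 I.2
    { part := fun c ↦ (component hI.1 c).rowLen
      mono := fun c i ↦ (component hI.1 c).rowLen_anti i (i + 1) i.le_succ
      bound := fun c i hi ↦ rowLen_eq_zero_of_card_le <|
        (card_fiber_le I.1 c).trans (hI.2.trans_le hi)
      total := by rw [← card_boxes, boxes_rowLen_component hI.1 hI.2.le, hI.2] }
  left_inv Λ := Multipartition.part_injective <| funext₂ fun _ _ ↦
    eq_of_forall_lt_iff fun _ ↦ lt_rowLen_component.trans Λ.mem_boxes_part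
  right_inv I := Subtype.ext <| by
    have hI := mem_orderIdeals.1 I.2
    exact boxes_rowLen_component hI.1 hI.2.le

variable {Λ : Multipartition m n} (T : StdTableau Λ)

lemma StdTableau.strictMonoOn_row (c : Fin m) (i : ℕ) :
    StrictMonoOn (T.entry c i) {j | j < Λ.part c i} :=
  strictMonoOn_of_lt_add_one Set.ordConnected_Iio fun j _ _ hj ↦ T.row c i j hj

lemma StdTableau.strictMonoOn_col (c : Fin m) (j : ℕ) :
    StrictMonoOn (T.entry c · j) {i | j < Λ.part c i} := by
  have hlower : IsLowerSet {i | j < Λ.part c i} := fun _ _ hle h ↦ h.trans_le (Λ.part_anti c hle)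
  exact strictMonoOn_of_lt_add_one hlower.ordConnected fun i _ _ hi ↦ T.col c i j hi

lemma StdTableau.entry_lt_entry {c : Fin m} {i j i' j' : ℕ} (hlt : (i, j) < (i', j'))
    (hbox : j' < Λ.part c i') : T.entry c i j < T.entry c i' j' := by
  have hle := Prod.mk_le_mk.1 hlt.le
  have hcorner : j < Λ.part c i' := hle.2.trans_lt hbox
  have hstart : j < Λ.part c i := hcorner.trans_le (Λ.part_anti c hle.1)
  have hcol := T.strictMonoOn_col c j
  have hrow := T.strictMonoOn_row c i'
  rcases Prod.mk_lt_mk.1 hlt with ⟨hi, hj⟩ | ⟨hi, hj⟩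
  · exact (hcol hstart hcorner hi).trans_le (hrow.monotoneOn hcorner hbox hj)
  · exact (hcol.monotoneOn hstart hcorner hi).trans_lt (hrow hcorner hbox hj)

lemma StdTableau.isStdFilling :
    IsStdFilling (boxes n Λ.part) fun x ↦ T.entry x.1 x.2.1 x.2.2 := by
  refine ⟨⟨?_, ?_, ?_⟩, ?_, ?_⟩
  · rintro ⟨c, i, j⟩ hx
    simpa [Λ.card_boxes_part] using T.lt_n c i j (Λ.mem_boxes_part.1 hx)
  · rintro ⟨c, i, j⟩ hx ⟨c', i', j'⟩ hy hxy
    have := T.inj _ _ _ _ _ _ (Λ.mem_boxes_part.1 hx) (Λ.mem_boxes_part.1 hy) hxy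
    grind
  · intro a ha
    obtain ⟨c, i, j, hbox, rfl⟩ := T.surj a (by simpa [Λ.card_boxes_part] using ha)
    exact ⟨⟨c, i, j⟩, Λ.mem_boxes_part.2 hbox, rfl⟩
  · rintro _ hx _ hy ⟨c, ⟨i, j⟩, ⟨i', j'⟩, hlt⟩
    exact T.entry_lt_entry hlt (Λ.mem_boxes_part.1 hy)
  · rintro ⟨c, i, j⟩ hx
    exact T.outside c i j (mt Λ.mem_boxes_part.2 hx)

/-- The boxwise identification of standard tableaux with standard fillings of the set of boxes. -/
def stdTableauEquiv (Λ : Multipartition m n) : StdTableau Λ ≃ StdFilling (boxes n Λ.part) where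
  toFun T := ⟨fun x ↦ T.entry x.1 x.2.1 x.2.2, T.isStdFilling⟩
  invFun t :=
    { entry := fun c i j ↦ t.1 ⟨c, i, j⟩
      lt_n := fun c i j h ↦
        (t.2.bijOn.mapsTo (Λ.mem_boxes_part.2 h)).trans_eq Λ.card_boxes_part
      inj := fun c i j c' i' j' h h' heq ↦ by
        have := t.2.bijOn.injOn (Λ.mem_boxes_part.2 h) (Λ.mem_boxes_part.2 h') heq
        grind
      surj := fun a ha ↦ by
        obtain ⟨⟨c, i, j⟩, hbox, rfl⟩ := t.2.bijOn.surjOn (ha.trans_eq Λ.card_boxes_part.symm)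
        exact ⟨c, i, j, Λ.mem_boxes_part.1 hbox, rfl⟩
      row := fun c i j h ↦ t.2.strictMonoOn (Λ.mem_boxes_part.2 (by lia))
        (Λ.mem_boxes_part.2 h) (by simp)
      col := fun c i j h ↦ t.2.strictMonoOn (Λ.mem_boxes_part.2 (h.trans_le (Λ.mono c i)))
        (Λ.mem_boxes_part.2 h) (by simp)
      outside := fun c i j h ↦ t.2.eq_zero _ (mt Λ.mem_boxes_part.1 h) }
  left_inv _ := rfl
  right_inv _ := rfl

end Multipartition

/-- For all `m ≥ 1` and `n ≥ 1`, the sum over all `m`-multipartitions `Λ`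
of `n` of the square of the number of standard tableaux of shape `Λ` equals `m^n · n!`
(stated as the cardinality of the type of triples `(Λ, s, t)` with `s, t` standard tableaux
of shape `Λ`). -/
theorem sum_sq_card_stdTableau (hm : 1 ≤ m) (hn : 1 ≤ n) :
    Nat.card ((Λ : Multipartition m n) × (StdTableau Λ × StdTableau Λ)) =
      m ^ n * n.factorial := by
  have hdiff : IsDifferential (Box m) m := by
    simpa using IsDifferential.sigma fun _ : Fin m ↦ isDifferential_nat_prod_nat
  calc Nat.card ((Λ : Multipartition m n) × (StdTableau Λ × StdTableau Λ))
    _ = Nat.card ((I : orderIdeals (Box m) n) × (StdFilling I.1 × StdFilling I.1)) :=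
      Nat.card_congr <| (multipartitionEquiv m n).sigmaCongr fun Λ ↦
        (stdTableauEquiv Λ).prodCongr (stdTableauEquiv Λ)
    _ = ∑ I ∈ orderIdeals (Box m) n, Nat.card (StdFilling I) ^ 2 := by
      simp only [Nat.card_sigma, Nat.card_prod, ← sq]
      exact Finset.sum_coe_sort _ fun I ↦ Nat.card (StdFilling I) ^ 2
    _ = m ^ n * n.factorial := hdiff.sum_card_stdFilling_sq n

end Cyclo
end
end

section
/- Let ζ ∈ k be a primitive m-th root of unity. Then the cyclotomic Hecke algebra H_n(1, ζ, ζ^2, …, ζ^{m−1}; 1), i.e. the algebra with parameters q = 1 and v_i = ζ^{i−1} for 1 ≤ i ≤ m, is isomorphic as a k-algebra to the group algebra k[G(m,1,n)], where G(m,1,n) is the semidirect product (ℤ/mℤ)^n ⋊ S_n with the symmetric group S_n acting by permuting the n coordinates. -/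
noncomputable section
open scoped Classical
open scoped Fin.NatCast

namespace Cyclo

variable (k : Type) [Field k] (m n : ℕ) (v : Fin m → k) (q : k)

variable (k : Type) [Field k] (m n : ℕ)

variable (k : Type) [Field k] (m n : ℕ) (v : Fin m → k) (q : k)

open Multipartition

/-- The action of `S_n` on `(ℤ/mℤ)^n` (written multiplicatively) by permuting the `n`
coordinates. -/
def permHom (m n : ℕ) : Equiv.Perm (Fin n) →* MulAut (Fin n → Multiplicative (ZMod m)) where
  toFun σ :=
    { toEquiv := Equiv.piCongrLeft' (fun _ => Multiplicative (ZMod m)) σ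
      map_mul' := fun f g => rfl }
  map_one' := by ext f i; rfl
  map_mul' := fun σ τ => by ext f i; rfl

/-- The complex reflection group `G(m,1,n) = (ℤ/mℤ)^n ⋊ S_n`. -/
def Gm1n (m n : ℕ) : Type :=
  SemidirectProduct (Fin n → Multiplicative (ZMod m)) (Equiv.Perm (Fin n)) (permHom m n)

instance (m n : ℕ) : Group (Gm1n m n) :=
  inferInstanceAs (Group (SemidirectProduct _ _ (permHom m n)))

/-!
Since `∏ⱼ (X - ζ^j) = X ^ m - 1`, at `q = 1` the relations of the Hecke algebra say exactly that
its generators satisfy the monoid relations `a₀ ^ m = 1`, `aᵢ ^ 2 = 1` (`i ≥ 1`) together with the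
braid relations. So it suffices that these relations present `G(m,1,n)`: the Hecke algebra and the
group algebra then have the same universal property.

For the presentation, let `Pₜ` be generated by `a₀, …, aₜ₋₁`. Multiplying
`aₜ ⋯ a₁ a₀ ^ e a₁ ⋯ aⱼ` (`j ≤ t`) on the right by `aᵢ`, `i ≤ t`, either yields another word of this
shape or moves a generator of `Pₜ` through to the left. Hence `Pₜ₊₁` is covered by `m (t + 1)`
translates of `Pₜ`, and `|Pₙ| ≤ m ^ n n! = |G(m,1,n)|`. Applied to the pairs `(gᵢ, aᵢ)` in
`G(m,1,n) × M`, where the `gᵢ` are the standard generators, this bound says that the submonoid they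
generate is the graph of a homomorphism.
-/

section Relations

variable {M N : Type*} [Monoid M] [Monoid N] {m n : ℕ} {a : ℕ → M}

/-- The defining relations of `G(m,1,n)`, imposed on the first `n` terms of a sequence in a monoid;
the generator `a_{i+1}` of the paper is `a i`. The values `a i` with `n ≤ i` are unconstrained,
except that `a 0 ^ m = 1` is required even when `n = 0`. -/
structure Gm1nRelations (m n : ℕ) (a : ℕ → M) : Prop where
  pow_eq_one : a 0 ^ m = 1
  mul_self : ∀ i, i + 1 < n → a (i + 1) * a (i + 1) = 1
  braid_zero : 1 < n → a 0 * a 1 * a 0 * a 1 = a 1 * a 0 * a 1 * a 0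
  commute : ∀ i j, i + 2 ≤ j → j < n → Commute (a i) (a j)
  braid : ∀ i, i + 2 < n → a (i + 2) * a (i + 1) * a (i + 2) = a (i + 1) * a (i + 2) * a (i + 1)

/-- The product `a_1 a_2 ⋯ a_t`. -/
def ascProd (a : ℕ → M) : ℕ → M
  | 0 => 1
  | t + 1 => ascProd a t * a (t + 1)

/-- The product `a_t ⋯ a_2 a_1`, which is the inverse of `ascProd a t` when the `a_i` are
involutions. -/
def descProd (a : ℕ → M) : ℕ → M
  | 0 => 1
  | t + 1 => a (t + 1) * descProd a t

/-- The submonoid generated by `a_0, …, a_{t-1}`; inside `G(m,1,n)` it is the standard parabolic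
subgroup `G(m,1,t)`. -/
def parabolic (a : ℕ → M) (t : ℕ) : Submonoid M :=
  Submonoid.closure (a '' Set.Iio t)

open scoped Pointwise in
/-- The elements `a_t ⋯ a_1 a_0 ^ e a_1 ⋯ a_j` with `j ≤ t`, which represent the right cosets of
`parabolic a t` in `parabolic a (t + 1)`. -/
def cosetReps (a : ℕ → M) (t : ℕ) : Set M :=
  {descProd a t} * (Submonoid.powers (a 0) : Set M) * ascProd a '' Set.Iic t

theorem mem_parabolic (a : ℕ → M) {i t : ℕ} (hi : i < t) : a i ∈ parabolic a t :=
  Submonoid.subset_closure ⟨i, hi, rfl⟩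

theorem map_parabolic (f : M →* N) (a : ℕ → M) (t : ℕ) :
    (parabolic a t).map f = parabolic (f ∘ a) t := by
  rw [parabolic, parabolic, MonoidHom.map_mclosure, Set.image_comp]

theorem mem_cosetReps {t : ℕ} {x : M} :
    x ∈ cosetReps a t ↔ ∃ e, ∃ j ≤ t, descProd a t * a 0 ^ e * ascProd a j = x := by
  simp [cosetReps, Set.mem_mul, Submonoid.mem_powers_iff]

namespace Gm1nRelations

theorem map (h : Gm1nRelations m n a) (f : M →* N) : Gm1nRelations m n (f ∘ a) where
  pow_eq_one := by simp [← map_pow, h.pow_eq_one]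
  mul_self i hi := by simp [← map_mul, h.mul_self i hi]
  braid_zero hn := by simp [← map_mul, h.braid_zero hn]
  commute i j hij hj := (h.commute i j hij hj).map f
  braid i hi := by simp [← map_mul, h.braid i hi]

theorem prodMk {b : ℕ → N} (ha : Gm1nRelations m n a) (hb : Gm1nRelations m n b) :
    Gm1nRelations m n fun i => (a i, b i) where
  pow_eq_one := Prod.ext ha.pow_eq_one hb.pow_eq_one
  mul_self i hi := Prod.ext (ha.mul_self i hi) (hb.mul_self i hi)
  braid_zero hn := Prod.ext (ha.braid_zero hn) (hb.braid_zero hn)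
  commute i j hij hj := (ha.commute i j hij hj).prod (hb.commute i j hij hj)
  braid i hi := Prod.ext (ha.braid i hi) (hb.braid i hi)

theorem ascProd_mul_descProd (h : Gm1nRelations m n a) {t : ℕ} (ht : t < n) :
    ascProd a t * descProd a t = 1 := by
  induction t with
  | zero => simp [ascProd, descProd]
  | succ t ih =>
    rw [ascProd, descProd, mul_assoc, ← mul_assoc (a (t + 1)), h.mul_self t ht, one_mul,
      ih (by lia)]

theorem descProd_mul_ascProd (h : Gm1nRelations m n a) {t : ℕ} (ht : t < n) :
    descProd a t * ascProd a t = 1 := by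
  induction t with
  | zero => simp [ascProd, descProd]
  | succ t ih =>
    rw [ascProd, descProd, mul_assoc, ← mul_assoc (descProd a t), ih (by lia), one_mul,
      h.mul_self t ht]

theorem commute_ascProd (h : Gm1nRelations m n a) {t i : ℕ} (hti : t + 2 ≤ i) (hi : i < n) :
    Commute (ascProd a t) (a i) := by
  induction t with
  | zero => exact Commute.one_left _
  | succ t ih => exact (ih (by lia)).mul_left (h.commute _ _ hti hi)

theorem semiconjBy_ascProd (h : Gm1nRelations m n a) {t i : ℕ} (hit : i + 2 ≤ t) (ht : t < n) :
    SemiconjBy (ascProd a t) (a (i + 1)) (a (i + 2)) := by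
  induction t, hit using Nat.le_induction with
  | base =>
    have braid : SemiconjBy (a (i + 1) * a (i + 2)) (a (i + 1)) (a (i + 2)) := by
      rw [SemiconjBy, ← h.braid i ht, mul_assoc]
    rw [ascProd, ascProd, mul_assoc]
    exact SemiconjBy.mul_left (h.commute_ascProd le_rfl ht) braid
  | succ t hit ih => exact (ih (by lia)).mul_left (h.commute _ _ (by lia) ht).symm

theorem semiconjBy_descProd (h : Gm1nRelations m n a) {t i : ℕ} (hit : i + 2 ≤ t) (ht : t < n) :
    SemiconjBy (descProd a t) (a (i + 2)) (a (i + 1)) :=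
  SemiconjBy.units_inv_symm_left
    (a := ⟨ascProd a t, descProd a t, h.ascProd_mul_descProd ht, h.descProd_mul_ascProd ht⟩)
    (h.semiconjBy_ascProd hit ht)

theorem commute_zero_conj_pow (h : Gm1nRelations m n a) (hn : 1 < n) (e : ℕ) :
    Commute (a 0) (a 1 * a 0 ^ e * a 1) := by
  have conj_pow : a 1 * a 0 ^ e * a 1 = (a 1 * a 0 * a 1) ^ e :=
    (Units.conj_pow ⟨a 1, a 1, h.mul_self 0 hn, h.mul_self 0 hn⟩ (a 0) e).symm
  have commute_conj : Commute (a 0) (a 1 * a 0 * a 1) := by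
    simpa only [Commute, SemiconjBy, mul_assoc] using h.braid_zero hn
  rw [conj_pow]
  exact commute_conj.pow_right e

theorem commute_zero_descProd_mul (h : Gm1nRelations m n a) {t : ℕ} (ht : t + 1 < n) {x : M}
    (hx : Commute (a 0) (a 1 * x)) : Commute (a 0) (descProd a (t + 1) * x) := by
  induction t with
  | zero => simpa [descProd] using hx
  | succ t ih =>
    rw [descProd, mul_assoc]
    exact (h.commute 0 (t + 2) (by lia) ht).mul_right (ih (by lia))

theorem commute_zero_mul_ascProd (h : Gm1nRelations m n a) {j : ℕ} (hj : j + 1 < n) {x : M}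
    (hx : Commute (a 0) (x * a 1)) : Commute (a 0) (x * ascProd a (j + 1)) := by
  induction j with
  | zero => simpa [ascProd] using hx
  | succ j ih =>
    rw [ascProd, ← mul_assoc]
    exact (ih (by lia)).mul_right (h.commute 0 (j + 2) (by lia) hj)

theorem commute_zero_cosetRep (h : Gm1nRelations m n a) {t j : ℕ} (ht : t + 1 < n)
    (hj : j + 1 < n) (e : ℕ) :
    Commute (a 0) (descProd a (t + 1) * a 0 ^ e * ascProd a (j + 1)) := by
  apply h.commute_zero_mul_ascProd hj
  rw [mul_assoc]
  apply h.commute_zero_descProd_mul ht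
  rw [← mul_assoc]
  exact h.commute_zero_conj_pow (by lia) e

theorem semiconjBy_cosetRep (h : Gm1nRelations m n a) {t j i i' e : ℕ} (hit : i + 2 ≤ t)
    (ht : t < n) (hasc : SemiconjBy (ascProd a j) (a i') (a (i + 2))) :
    SemiconjBy (descProd a t * a 0 ^ e * ascProd a j) (a i') (a (i + 1)) :=
  ((h.semiconjBy_descProd hit ht).mul_left
    ((h.commute 0 (i + 2) (by lia) (by lia)).pow_left e)).mul_left hasc

open scoped Pointwise in
theorem cosetRep_mul_mem (h : Gm1nRelations m n a) {t i : ℕ} (ht : t < n) (hi : i ≤ t) {r : M}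
    (hr : r ∈ cosetReps a t) : r * a i ∈ (parabolic a t : Set M) * cosetReps a t := by
  have of_mem {x : M} (hx : x ∈ cosetReps a t) : x ∈ (parabolic a t : Set M) * cosetReps a t :=
    ⟨1, one_mem _, x, hx, one_mul x⟩
  have of_semiconjBy {i' : ℕ} (hi' : i' < t) (hsemi : SemiconjBy r (a i) (a i')) :
      r * a i ∈ (parabolic a t : Set M) * cosetReps a t :=
    ⟨a i', mem_parabolic a hi', r, hr, hsemi.eq.symm⟩
  obtain ⟨e, j, hj, rfl⟩ := mem_cosetReps.1 hr
  obtain _ | i := i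
  · obtain _ | j := j
    · refine of_mem (mem_cosetReps.2 ⟨e + 1, 0, hj, ?_⟩)
      simp only [ascProd, mul_one, pow_succ, mul_assoc]
    · obtain ⟨t, rfl⟩ : ∃ s, t = s + 1 := ⟨t - 1, by lia⟩
      exact of_semiconjBy t.succ_pos (h.commute_zero_cosetRep ht (by lia) e).symm
  · obtain hij | rfl | rfl | hij : i + 1 < j ∨ j = i + 1 ∨ j = i ∨ j < i := by lia
    · exact of_semiconjBy (by lia)
        (h.semiconjBy_cosetRep (by lia) ht (h.semiconjBy_ascProd hij (by lia)))
    · refine of_mem (mem_cosetReps.2 ⟨e, i, by lia, ?_⟩)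
      simp only [ascProd, mul_assoc, h.mul_self i (by lia), mul_one]
    · refine of_mem (mem_cosetReps.2 ⟨e, j + 1, hi, ?_⟩)
      simp only [ascProd, mul_assoc]
    · obtain ⟨i, rfl⟩ : ∃ s, i = s + 1 := ⟨i - 1, by lia⟩
      exact of_semiconjBy (by lia)
        (h.semiconjBy_cosetRep hi ht (h.commute_ascProd (by lia) (by lia)))

open scoped Pointwise in
theorem parabolic_succ_subset (h : Gm1nRelations m n a) {t : ℕ} (ht : t < n) :
    (parabolic a (t + 1) : Set M) ⊆ parabolic a t * cosetReps a t := by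
  intro x hx
  induction hx using Submonoid.closure_induction_right with
  | one =>
    exact ⟨1, one_mem _, 1, mem_cosetReps.2 ⟨0, t, le_rfl, by simp [h.descProd_mul_ascProd ht]⟩,
      one_mul 1⟩
  | mul_right x _ y hy ih =>
    obtain ⟨i, hi, rfl⟩ := hy
    obtain ⟨p, hp, r, hr, rfl⟩ := ih
    obtain ⟨p', hp', r', hr', hpr⟩ := h.cosetRep_mul_mem ht (Nat.lt_succ_iff.1 hi) hr
    exact ⟨p * p', mul_mem hp hp', r', hr', by simp only [mul_assoc, ← hpr]⟩

open scoped Cardinal in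
theorem mk_cosetReps_le [NeZero m] (h : Gm1nRelations m n a) (t : ℕ) :
    #(cosetReps a t) ≤ (m * (t + 1) : ℕ) := by
  have mk_powers : #(Submonoid.powers (a 0) : Set M) ≤ m := by
    have powers_subset : (Submonoid.powers (a 0) : Set M) ⊆ (a 0 ^ ·) '' Set.Iio m := by
      rintro _ ⟨e, rfl⟩
      exact ⟨e % m, Nat.mod_lt e (NeZero.pos m), (pow_eq_pow_mod e h.pow_eq_one).symm⟩
    refine (Cardinal.mk_le_mk_of_subset powers_subset).trans ?_
    simpa using Cardinal.mk_image_le_lift (f := (a 0 ^ ·)) (s := Set.Iio m)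
  have mk_ascProd : #(ascProd a '' Set.Iic t) ≤ (t + 1 : ℕ) := by
    simpa using Cardinal.mk_image_le_lift (f := ascProd a) (s := Set.Iic t)
  calc #(cosetReps a t)
      ≤ #({descProd a t} : Set M) * #(Submonoid.powers (a 0) : Set M) * #(ascProd a '' Set.Iic t) :=
        Cardinal.mk_mul_le.trans (mul_le_mul_left Cardinal.mk_mul_le _)
    _ ≤ 1 * m * (t + 1 : ℕ) := by gcongr; simp
    _ = (m * (t + 1) : ℕ) := by push_cast; ring

open scoped Cardinal Nat in
theorem mk_parabolic_le [NeZero m] (h : Gm1nRelations m n a) {t : ℕ} (ht : t ≤ n) :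
    #(parabolic a t) ≤ (m ^ t * t ! : ℕ) := by
  induction t with
  | zero => simp [parabolic]
  | succ t ih =>
    calc #(parabolic a (t + 1))
        ≤ #(parabolic a t) * #(cosetReps a t) :=
          (Cardinal.mk_le_mk_of_subset (h.parabolic_succ_subset ht)).trans Cardinal.mk_mul_le
      _ ≤ (m ^ t * t ! : ℕ) * (m * (t + 1) : ℕ) := mul_le_mul' (ih (by lia)) (h.mk_cosetReps_le t)
      _ = (m ^ (t + 1) * (t + 1)! : ℕ) := by rw [Nat.factorial_succ]; push_cast; ring

end Gm1nRelations

end Relations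

theorem natCast_fin_ne {n : ℕ} [NeZero n] {i j : ℕ} (hi : i < n) (hj : j < n) (hij : i ≠ j) :
    (i : Fin n) ≠ (j : Fin n) := by
  simpa [Fin.ext_iff, Nat.mod_eq_of_lt hi, Nat.mod_eq_of_lt hj] using hij

theorem swap_braid {α : Type*} [DecidableEq α] {x y z : α} (hxy : x ≠ y) (hyz : y ≠ z)
    (hxz : x ≠ z) :
    Equiv.swap y z * Equiv.swap x y * Equiv.swap y z =
      Equiv.swap x y * Equiv.swap y z * Equiv.swap x y := by
  have conj_left := Equiv.swap_mul_swap_mul_swap hyz.symm hxz.symm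
  rw [Equiv.swap_comm z y, Equiv.swap_comm y x, Equiv.swap_comm x z] at conj_left
  rw [conj_left, Equiv.swap_mul_swap_mul_swap hxy hxz]

theorem permHom_mulSingle {m n : ℕ} (σ : Equiv.Perm (Fin n)) (i : Fin n)
    (x : Multiplicative (ZMod m)) :
    permHom m n σ (Pi.mulSingle i x) = Pi.mulSingle (σ i) x := by
  funext j
  change (Pi.mulSingle i x : Fin n → Multiplicative (ZMod m)) (σ.symm j) = _
  simp only [Pi.mulSingle_apply, Equiv.symm_apply_eq]

namespace Gm1n

variable {m n : ℕ}

/-- The inclusion of the normal subgroup `(ℤ/mℤ)^n` of diagonal elements. -/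
def diag : (Fin n → Multiplicative (ZMod m)) →* Gm1n m n :=
  SemidirectProduct.inl (φ := permHom m n)

/-- The inclusion of the subgroup `S_n` of permutations. -/
def perm : Equiv.Perm (Fin n) →* Gm1n m n :=
  SemidirectProduct.inr (φ := permHom m n)

/-- The standard generators: `generator 0` multiplies the first coordinate by a generator of
`ℤ/mℤ`, and `generator (t + 1)` is the transposition of the (0-based) coordinates `t` and `t + 1`.
Indices are read modulo `n`, so only the values below `n` are meaningful. -/
def generator [NeZero n] : ℕ → Gm1n m n
  | 0 => diag (Pi.mulSingle 0 (Multiplicative.ofAdd 1))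
  | t + 1 => perm (Equiv.swap (t : Fin n) ((t + 1 : ℕ) : Fin n))

theorem diag_mul_perm_surjective (g : Gm1n m n) : ∃ f σ, diag f * perm σ = g :=
  ⟨g.left, g.right, SemidirectProduct.inl_left_mul_inr_right g⟩

open scoped Nat in
theorem natCard_eq (m n : ℕ) : Nat.card (Gm1n m n) = m ^ n * n ! := by
  have card_zmod : Nat.card (Multiplicative (ZMod m)) = m :=
    (Nat.card_congr Multiplicative.toAdd).trans (Nat.card_zmod m)
  rw [Gm1n, SemidirectProduct.card, Nat.card_fun, card_zmod, Nat.card_perm, Nat.card_fin]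

theorem semiconjBy_perm_diag_mulSingle (σ : Equiv.Perm (Fin n)) (i : Fin n)
    (x : Multiplicative (ZMod m)) :
    SemiconjBy (perm σ) (diag (Pi.mulSingle i x)) (diag (Pi.mulSingle (σ i) x)) := by
  rw [← permHom_mulSingle]
  refine (?_ : SemidirectProduct.inr σ * SemidirectProduct.inl (Pi.mulSingle i x) =
    SemidirectProduct.inl (permHom m n σ (Pi.mulSingle i x)) * SemidirectProduct.inr σ)
  rw [SemidirectProduct.inl_aut, map_inv, inv_mul_cancel_right]

theorem generator_zero_pow [NeZero n] : (generator 0 : Gm1n m n) ^ m = 1 := by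
  rw [generator, ← map_pow, ← Pi.mulSingle_pow, ← ofAdd_nsmul]
  simp

theorem generator_succ_mul_self [NeZero n] (i : ℕ) :
    (generator (i + 1) * generator (i + 1) : Gm1n m n) = 1 := by
  rw [generator, ← map_mul, Equiv.swap_mul_self, map_one]

theorem generator_braid_zero [NeZero n] :
    (generator 0 * generator 1 * generator 0 * generator 1 : Gm1n m n) =
      generator 1 * generator 0 * generator 1 * generator 0 := by
  set s : Gm1n m n := generator 1
  set d : Gm1n m n := generator 0
  obtain ⟨d', hsemi, hcomm⟩ : ∃ d', SemiconjBy s d d' ∧ Commute d d' :=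
    ⟨_, semiconjBy_perm_diag_mulSingle _ _ _, (Commute.all _ _).map diag⟩
  have hs : s * s = 1 := generator_succ_mul_self 0
  calc d * s * d * s = d * (s * d) * s := by group
    _ = d * d' * (s * s) := by rw [hsemi.eq]; group
    _ = d' * (s * s) * d := by rw [hs, hcomm.eq]; group
    _ = s * d * s * d := by rw [hsemi.eq]; group

theorem commute_generator [NeZero n] {i j : ℕ} (hij : i + 2 ≤ j) (hj : j < n) :
    Commute (generator i : Gm1n m n) (generator j) := by
  obtain ⟨j, rfl⟩ : ∃ s, j = s + 1 := ⟨j - 1, by lia⟩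
  obtain _ | i := i
  · have fixes_zero : Equiv.swap (j : Fin n) ((j + 1 : ℕ) : Fin n) 0 = 0 := by
      rw [← Nat.cast_zero]
      exact Equiv.swap_apply_of_ne_of_ne (natCast_fin_ne (by lia) (by lia) (by lia))
        (natCast_fin_ne (by lia) hj (by lia))
    have hsemi := semiconjBy_perm_diag_mulSingle (m := m)
      (Equiv.swap (j : Fin n) ((j + 1 : ℕ) : Fin n)) 0 (Multiplicative.ofAdd 1)
    rw [fixes_zero] at hsemi
    exact hsemi.symm
  · refine (Equiv.Perm.disjoint_swap_swap ?_).commute.map perm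
    have hne {r s : ℕ} : r < n → s < n → r ≠ s → (r : Fin n) ≠ (s : Fin n) := natCast_fin_ne
    simp only [List.nodup_cons, List.mem_cons, List.not_mem_nil, or_false, not_or,
      not_false_eq_true, List.nodup_nil, and_true]
    exact ⟨⟨hne (by lia) (by lia) (by lia), hne (by lia) (by lia) (by lia),
      hne (by lia) (by lia) (by lia)⟩, ⟨hne (by lia) (by lia) (by lia),
      hne (by lia) (by lia) (by lia)⟩, hne (by lia) (by lia) (by lia)⟩

theorem generator_braid [NeZero n] {i : ℕ} (hi : i + 2 < n) :
    (generator (i + 2) * generator (i + 1) * generator (i + 2) : Gm1n m n) =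
      generator (i + 1) * generator (i + 2) * generator (i + 1) := by
  simp only [generator, ← map_mul]
  exact congrArg perm (swap_braid (natCast_fin_ne (by lia) (by lia) (by lia))
    (natCast_fin_ne (by lia) hi (by lia)) (natCast_fin_ne (by lia) hi (by lia)))

theorem generator_relations (m n : ℕ) [NeZero n] :
    Gm1nRelations m n (generator : ℕ → Gm1n m n) where
  pow_eq_one := generator_zero_pow
  mul_self i _ := generator_succ_mul_self i
  braid_zero _ := generator_braid_zero
  commute _ _ := commute_generator
  braid _ := generator_braid

theorem perm_mem_parabolic [NeZero n] (σ : Equiv.Perm (Fin n)) :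
    perm σ ∈ parabolic (generator : ℕ → Gm1n m n) n := by
  obtain ⟨n, rfl⟩ := Nat.exists_eq_succ_of_ne_zero (NeZero.ne n)
  suffices ⊤ ≤ (parabolic (generator : ℕ → Gm1n m (n + 1)) (n + 1)).comap perm from
    this (Submonoid.mem_top σ)
  rw [← Equiv.Perm.mclosure_swap_castSucc_succ, Submonoid.closure_le]
  rintro _ ⟨i, rfl⟩
  have mem_generator := mem_parabolic (generator : ℕ → Gm1n m (n + 1)) (Nat.succ_lt_succ i.isLt)
  simpa [generator] using mem_generator

theorem diag_mem_parabolic [NeZero m] [NeZero n] (f : Fin n → Multiplicative (ZMod m)) :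
    diag f ∈ parabolic (generator : ℕ → Gm1n m n) n := by
  set P := parabolic (generator : ℕ → Gm1n m n) n
  have mem_of_generator (i : Fin n) : diag (Pi.mulSingle i (Multiplicative.ofAdd 1)) ∈ P := by
    have hsemi := semiconjBy_perm_diag_mulSingle (m := m) (Equiv.swap 0 i) 0
      (Multiplicative.ofAdd 1)
    rw [Equiv.swap_apply_left] at hsemi
    rw [← mul_inv_eq_iff_eq_mul.2 hsemi.eq, ← map_inv]
    exact mul_mem (mul_mem (perm_mem_parabolic _) (mem_parabolic generator (NeZero.pos n)))
      (perm_mem_parabolic _)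
  have mem_of_single (i : Fin n) (x : Multiplicative (ZMod m)) : diag (Pi.mulSingle i x) ∈ P := by
    have hx : x = Multiplicative.ofAdd (1 : ZMod m) ^ x.toAdd.val := by simp [← ofAdd_nsmul]
    rw [hx, Pi.mulSingle_pow, map_pow]
    exact pow_mem (mem_of_generator i) _
  rw [← Submonoid.mem_comap, ← Finset.univ_prod_mulSingle f]
  exact prod_mem fun i _ => mem_of_single i (f i)

theorem parabolic_generator_eq_top (m n : ℕ) [NeZero m] [NeZero n] :
    parabolic (generator : ℕ → Gm1n m n) n = ⊤ := by
  refine eq_top_iff.2 fun g _ => ?_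
  obtain ⟨f, σ, rfl⟩ := diag_mul_perm_surjective g
  exact mul_mem (diag_mem_parabolic f) (perm_mem_parabolic σ)

theorem monoidHom_ext {M : Type*} [Monoid M] [NeZero m] [NeZero n] {f g : Gm1n m n →* M}
    (hfg : ∀ i < n, f (generator i) = g (generator i)) : f = g := by
  refine MonoidHom.eq_of_eqOn_denseM (parabolic_generator_eq_top m n) ?_
  rintro _ ⟨i, hi, rfl⟩
  exact hfg i hi

end Gm1n

theorem Gm1nRelations.exists_monoidHom {M : Type*} [Monoid M] {m n : ℕ} [NeZero m] [NeZero n]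
    {a : ℕ → M} (h : Gm1nRelations m n a) :
    ∃ f : Gm1n m n →* M, ∀ i < n, f (Gm1n.generator i) = a i := by
  let b : ℕ → Gm1n m n × M := fun i => (Gm1n.generator i, a i)
  let graph : Submonoid (Gm1n m n × M) := parabolic b n
  let π : graph →* Gm1n m n := (MonoidHom.fst _ _).comp graph.subtype
  have π_surjective : Function.Surjective π := by
    have map_graph : graph.map (MonoidHom.fst _ _) = ⊤ :=
      (map_parabolic _ b n).trans (Gm1n.parabolic_generator_eq_top m n)
    rwa [← MonoidHom.mrange_eq_top, MonoidHom.mrange_comp, Submonoid.mrange_subtype]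
  have mk_graph := ((Gm1n.generator_relations m n).prodMk h).mk_parabolic_le le_rfl
  have : Finite graph :=
    Cardinal.lt_aleph0_iff_finite.1 (mk_graph.trans_lt Cardinal.natCast_lt_aleph0)
  have card_graph : Nat.card graph ≤ Nat.card (Gm1n m n) := by
    rw [Gm1n.natCard_eq]
    rwa [← Nat.cast_card, Nat.cast_le] at mk_graph
  let e := MulEquiv.ofBijective π (π_surjective.bijective_of_nat_card_le card_graph)
  refine ⟨((MonoidHom.snd _ _).comp graph.subtype).comp e.symm.toMonoidHom, fun i hi => ?_⟩
  have e_symm : e.symm (Gm1n.generator i) = ⟨b i, mem_parabolic b hi⟩ :=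
    e.symm_apply_eq.2 rfl
  exact congrArg (fun x : graph => x.1.2) e_symm

section HeckeAlgebra

open Polynomial

theorem prod_ofFn_sub_algebraMap {R A : Type*} [CommRing R] [Ring A] [Algebra R A] {m : ℕ}
    {v : Fin m → R} (hv : ∏ j, (X - C (v j)) = X ^ m - 1) (x : A) :
    (List.ofFn fun j => x - algebraMap R A (v j)).prod = x ^ m - 1 := by
  have haeval := congrArg (aeval x) hv
  rw [← List.prod_ofFn, map_list_prod, List.map_ofFn] at haeval
  simpa [Function.comp_def] using haeval

theorem prod_X_sub_C_pow_eq {R : Type*} [CommRing R] [IsDomain R] {m : ℕ} [NeZero m] {ζ : R}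
    (hζ : IsPrimitiveRoot ζ m) :
    ∏ j : Fin m, (X - C (ζ ^ (j : ℕ))) = X ^ m - 1 := by
  have hprod := X_pow_sub_C_eq_prod hζ (NeZero.pos m) (one_pow m)
  rw [Finset.prod_range] at hprod
  simpa using hprod.symm

theorem sub_one_mul_add_one_eq_zero_iff {A : Type*} [Ring A] {x : A} :
    (x - 1) * (x + 1) = 0 ↔ x * x = 1 := by
  rw [← (Commute.one_right x).mul_self_sub_mul_self_eq', one_mul, sub_eq_zero]

variable {k : Type} [Field k] {m n : ℕ} {v : Fin m → k}

/-- The quotient map presenting the Hecke algebra, with values in `CH` rather than in the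
underlying `RingQuot`. -/
def mkCH (k : Type) [Field k] (m n : ℕ) (v : Fin m → k) (q : k) :
    FreeAlgebra k (Fin n) →ₐ[k] CH k m n v q :=
  RingQuot.mkAlgHom k (Rel k m n v q)

theorem mkCH_eq_of_rel {q : k} {x y : FreeAlgebra k (Fin n)} (hxy : Rel k m n v q x y) :
    mkCH k m n v q x = mkCH k m n v q y :=
  RingQuot.mkAlgHom_rel k hxy

theorem mkCH_ι [NeZero n] (q : k) {i : ℕ} (hi : i < n) :
    mkCH k m n v q (FreeAlgebra.ι k ⟨i, hi⟩) = gen k m n v q i := by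
  rw [gen, Fin.natCast_eq_mk hi]
  rfl

theorem gen_relations [NeZero n] (hv : ∏ j, (X - C (v j)) = X ^ m - 1) :
    Gm1nRelations m n (gen k m n v 1) where
  pow_eq_one := by
    have cyclotomic := mkCH_eq_of_rel (Rel.cyclo (q := 1) (v := v) ⟨0, NeZero.pos n⟩ rfl)
    rwa [prod_ofFn_sub_algebraMap hv, map_sub, map_pow, map_one, map_zero, mkCH_ι, sub_eq_zero]
      at cyclotomic
  mul_self i hi := by
    have quadratic := mkCH_eq_of_rel (Rel.quad (q := 1) (v := v) ⟨i + 1, hi⟩ i.succ_pos)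
    rwa [map_one, map_mul, map_sub, map_add, map_one, map_zero, mkCH_ι,
      sub_one_mul_add_one_eq_zero_iff] at quadratic
  braid_zero hn := by
    simpa only [map_mul, mkCH_ι] using
      mkCH_eq_of_rel (Rel.braid0 (q := 1) (v := v) ⟨0, NeZero.pos n⟩ ⟨1, hn⟩ rfl rfl)
  commute i j hij hj := by
    have hi : i < n := by lia
    simpa only [Commute, SemiconjBy, map_mul, mkCH_ι] using
      mkCH_eq_of_rel (Rel.comm (q := 1) (v := v) ⟨i, hi⟩ ⟨j, hj⟩ hij)
  braid i hi := by
    simpa only [map_mul, mkCH_ι] using mkCH_eq_of_rel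
      (Rel.braid (q := 1) (v := v) ⟨i + 1, Nat.lt_of_succ_lt hi⟩ ⟨i + 2, hi⟩ i.succ_pos rfl)

theorem exists_algHom_of_relations {A : Type*} [Ring A] [Algebra k A] [NeZero n] {b : ℕ → A}
    (hv : ∏ j, (X - C (v j)) = X ^ m - 1) (hb : Gm1nRelations m n b) :
    ∃ φ : CH k m n v 1 →ₐ[k] A, ∀ i < n, φ (gen k m n v 1 i) = b i := by
  let F : FreeAlgebra k (Fin n) →ₐ[k] A := FreeAlgebra.lift k fun i => b i
  have F_ι (i : Fin n) : F (FreeAlgebra.ι k i) = b i := FreeAlgebra.lift_ι_apply _ i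
  have F_rel ⦃x y : FreeAlgebra k (Fin n)⦄ (hxy : Rel k m n v 1 x y) : F x = F y := by
    induction hxy with
    | cyclo i hi =>
      rw [prod_ofFn_sub_algebraMap hv, map_sub, map_pow, F_ι, hi, hb.pow_eq_one, map_one, map_zero,
        sub_self]
    | quad i hi =>
      rw [map_one, map_mul, map_sub, map_add, map_one, map_zero, F_ι,
        sub_one_mul_add_one_eq_zero_iff]
      obtain ⟨t, ht⟩ := Nat.exists_eq_add_of_le' hi
      rw [ht, hb.mul_self t (by lia)]
    | braid0 i j hi hj => simp only [map_mul, F_ι, hi, hj, hb.braid_zero (by lia)]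
    | comm i j hij => simp only [map_mul, F_ι, (hb.commute i j hij j.isLt).eq]
    | braid i j hi hj =>
      obtain ⟨t, ht⟩ := Nat.exists_eq_add_of_le' hi
      simp only [map_mul, F_ι, hj, ht, hb.braid t (by lia)]
  refine ⟨RingQuot.liftAlgHom k ⟨F, F_rel⟩, fun i hi => ?_⟩
  rw [← mkCH_ι 1 hi]
  exact (RingQuot.liftAlgHom_mkAlgHom_apply k F F_rel _).trans (F_ι ⟨i, hi⟩)

theorem algHom_ext_gen {A : Type*} [Semiring A] [Algebra k A] [NeZero n] {q : k}
    {φ ψ : CH k m n v q →ₐ[k] A} (hφψ : ∀ i < n, φ (gen k m n v q i) = ψ (gen k m n v q i)) :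
    φ = ψ := by
  refine RingQuot.ringQuot_ext' k φ ψ (FreeAlgebra.hom_ext (funext fun i => ?_))
  have hi := hφψ i i.isLt
  rwa [← mkCH_ι q i.isLt] at hi

theorem specialization_group_algebra_general [NeZero n]
    (hv : ∏ j, (X - C (v j)) = X ^ m - 1) :
    Nonempty (CH k m n v 1 ≃ₐ[k] MonoidAlgebra k (Gm1n m n)) := by
  have : NeZero m := ⟨by rintro rfl; simp at hv⟩
  obtain ⟨ψ, hψ⟩ := (gen_relations (n := n) hv).exists_monoidHom
  obtain ⟨φ, hφ⟩ := exists_algHom_of_relations hv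
    ((Gm1n.generator_relations m n).map (MonoidAlgebra.of k (Gm1n m n)))
  refine ⟨AlgEquiv.ofAlgHom φ (MonoidAlgebra.lift k _ _ ψ) ?_ ?_⟩
  · apply (MonoidAlgebra.lift k _ _).symm.injective
    refine Gm1n.monoidHom_ext fun i hi => ?_
    simp [hψ i hi, hφ i hi]
  · refine algHom_ext_gen fun i hi => ?_
    simp [hψ i hi, hφ i hi]

end HeckeAlgebra

/-- If `ζ ∈ k` is a primitive `m`-th root of unity, then the cyclotomic
Hecke algebra `H_n(1, ζ, …, ζ^{m−1}; 1)` is isomorphic as a `k`-algebra to the group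
algebra `k[G(m,1,n)]` of `G(m,1,n) = (ℤ/mℤ)^n ⋊ S_n`. -/
theorem specialization_group_algebra [NeZero m] [NeZero n] (ζ : k)
    (hζ : IsPrimitiveRoot ζ m) :
    Nonempty
      (CH k m n (fun j : Fin m => ζ ^ (j : ℕ)) 1 ≃ₐ[k] MonoidAlgebra k (Gm1n m n)) := by
  exact specialization_group_algebra_general (prod_X_sub_C_pow_eq hζ)

end Cyclo
end
end

section
/- The element c_n = L_1 + L_2 + ⋯ + L_n is central in the cyclotomic Hecke algebra H_n(v_1,…,v_m;q). -/
noncomputable section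
open scoped Classical
open scoped Fin.NatCast

namespace Cyclo

variable (k : Type) [Field k] (m n : ℕ) (v : Fin m → k) (q : k)

variable (k : Type) [Field k] (m n : ℕ)

variable (k : Type) [Field k] (m n : ℕ) (v : Fin m → k) (q : k)

open Multipartition

/-! A generator `a_j` commutes with `L_i` for `i < j - 1`, because it commutes with `a_1, …, a_i`.
By the braid relations it commutes with `L_{j+1}`, and hence with `L_i` for every `i > j`. Finally,
`a_1 = L_1`, and for `j > 1` the quadratic relation makes `a_j` commute with
`L_{j-1} + L_j = L_{j-1} + q⁻¹ a_j L_{j-1} a_j`. So every generator commutes with `c_n`. -/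

theorem commute_mul_mul_of_braid {S : Type*} [Semigroup S] {x y z : S}
    (braid : y * x * y = x * y * x) (hyz : Commute y z) :
    Commute x (y * (x * z * x) * y) :=
  calc
    x * (y * (x * z * x) * y) = x * y * x * z * x * y := by simp only [mul_assoc]
    _ = y * x * (y * z) * x * y := by rw [← braid]; simp only [mul_assoc]
    _ = y * x * z * (y * x * y) := by rw [hyz.eq]; simp only [mul_assoc]
    _ = y * (x * z * x) * y * x := by rw [braid]; simp only [mul_assoc]

theorem commute_smul_add_mul_mul_of_sq_eq {R A : Type*} [CommSemiring R] [Semiring A]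
    [Algebra R A] {b c : R} {x : A} (hx : x * x = b • x + c • 1) (y : A) :
    Commute x (c • y + x * y * x) :=
  calc
    x * (c • y + x * y * x) = c • (x * y) + x * x * y * x := by
      rw [mul_add, mul_smul_comm]; simp only [mul_assoc]
    _ = c • (x * y) + (b • (x * y * x) + c • (y * x)) := by
      rw [hx]; simp only [add_mul, smul_mul_assoc, one_mul]
    _ = c • (y * x) + x * y * (x * x) := by
      rw [hx, mul_add, mul_smul_comm, mul_smul_comm, mul_one]; abel
    _ = (c • y + x * y * x) * x := by
      rw [add_mul, smul_mul_assoc]; simp only [mul_assoc]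

section HeckeFamily

variable {R A : Type*} [CommRing R] [Ring A] [Algebra R A]

/-- `g 0, …, g (n - 1)` satisfy the defining relations of `a_1, …, a_n` in the Hecke algebras of
type `G(m,1,n)`, apart from the polynomial equation for `a_1`; the other terms of `g` are
arbitrary. -/
structure IsHeckeFamily (q : R) (n : ℕ) (g : ℕ → A) : Prop where
  quad : ∀ {i}, 1 ≤ i → i < n → (g i - algebraMap R A q) * (g i + 1) = 0
  braid_zero : 1 < n → g 0 * g 1 * g 0 * g 1 = g 1 * g 0 * g 1 * g 0
  comm : ∀ {i j}, i + 2 ≤ j → j < n → Commute (g i) (g j)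
  braid : ∀ {i}, 1 ≤ i → i + 1 < n → g (i + 1) * g i * g (i + 1) = g i * g (i + 1) * g i

/-- The Murphy elements of a sequence `g` in an algebra: `murphySeq q g t` is `L_{t+1}` formed with
`a_{i+1} = g i`. The parameter is a unit so that `q⁻¹` makes sense over any commutative ring. -/
def murphySeq (q : Rˣ) (g : ℕ → A) : ℕ → A
  | 0 => g 0
  | t + 1 => q⁻¹ • (g (t + 1) * murphySeq q g t * g (t + 1))

theorem commute_murphySeq_succ {q : Rˣ} {g : ℕ → A} {x : A} {t : ℕ}
    (hg : Commute x (g (t + 1))) (hL : Commute x (murphySeq q g t)) :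
    Commute x (murphySeq q g (t + 1)) :=
  ((hg.mul_right hL).mul_right hg).smul_right _

namespace IsHeckeFamily

theorem mul_self {q : R} {n : ℕ} {g : ℕ → A} (h : IsHeckeFamily q n g) {i : ℕ}
    (hi : 1 ≤ i) (hin : i < n) : g i * g i = (q - 1) • g i + q • 1 := by
  have quad := h.quad hi hin
  rw [Algebra.algebraMap_eq_smul_one, mul_add, sub_mul, smul_mul_assoc, one_mul, mul_one] at quad
  rw [sub_smul, one_smul, ← sub_eq_zero, ← quad]
  abel

variable {q : Rˣ} {n : ℕ} {g : ℕ → A}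

theorem commute_murphySeq_of_add_two_le (h : IsHeckeFamily (q : R) n g) {i t : ℕ}
    (hti : t + 2 ≤ i) (hi : i < n) : Commute (g i) (murphySeq q g t) := by
  induction t with
  | zero => exact (h.comm hti hi).symm
  | succ t ih => exact commute_murphySeq_succ (h.comm hti hi).symm (ih (by lia))

theorem commute_murphySeq_add_one (h : IsHeckeFamily (q : R) n g) {i : ℕ} (hi : i + 1 < n) :
    Commute (g i) (murphySeq q g (i + 1)) := by
  refine Commute.smul_right ?_ _
  cases i with
  | zero => simpa only [Commute, SemiconjBy, murphySeq, ← mul_assoc] using h.braid_zero hi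
  | succ i =>
    rw [murphySeq, mul_smul_comm, smul_mul_assoc]
    have braid := h.braid (Nat.le_add_left 1 i) hi
    have comm := h.commute_murphySeq_of_add_two_le le_rfl hi
    exact (commute_mul_mul_of_braid braid comm).smul_right _

theorem commute_murphySeq_of_lt (h : IsHeckeFamily (q : R) n g) {i t : ℕ}
    (hit : i < t) (ht : t < n) : Commute (g i) (murphySeq q g t) := by
  induction t, hit using Nat.le_induction with
  | base => exact h.commute_murphySeq_add_one ht
  | succ t hit ih => exact commute_murphySeq_succ (h.comm (by lia) ht) (ih (by lia))

theorem commute_murphySeq_add_murphySeq (h : IsHeckeFamily (q : R) n g) {i : ℕ}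
    (hi : i + 1 < n) : Commute (g (i + 1)) (murphySeq q g i + murphySeq q g (i + 1)) := by
  have hsum : murphySeq q g i + murphySeq q g (i + 1) =
      q⁻¹ • ((q : R) • murphySeq q g i + g (i + 1) * murphySeq q g i * g (i + 1)) := by
    rw [smul_add, ← Units.smul_def, inv_smul_smul, murphySeq]
  rw [hsum]
  have hsq := h.mul_self (Nat.le_add_left 1 i) hi
  exact (commute_smul_add_mul_mul_of_sq_eq hsq _).smul_right _

theorem commute_sum_range_succ_murphySeq (h : IsHeckeFamily (q : R) n g) {j : ℕ} (hj : j < n) :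
    Commute (g j) (∑ t ∈ Finset.range (j + 1), murphySeq q g t) := by
  cases j with
  | zero => simp [murphySeq]
  | succ i =>
    rw [Finset.sum_range_succ, Finset.sum_range_succ, add_assoc]
    refine (Commute.sum_right _ _ _ fun t ht => ?_).add_right (h.commute_murphySeq_add_murphySeq hj)
    have hti : t < i := Finset.mem_range.mp ht
    exact h.commute_murphySeq_of_add_two_le (by lia) hj

theorem commute_sum_murphySeq (h : IsHeckeFamily (q : R) n g) {j : ℕ} (hj : j < n) :
    Commute (g j) (∑ t ∈ Finset.range n, murphySeq q g t) := by
  rw [← Finset.sum_range_add_sum_Ico _ hj]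
  refine (h.commute_sum_range_succ_murphySeq hj).add_right (Commute.sum_right _ _ _ fun t ht => ?_)
  obtain ⟨hjt, htn⟩ := Finset.mem_Ico.mp ht
  exact h.commute_murphySeq_of_lt hjt htn

end IsHeckeFamily

theorem sum_murphy_central_general {q : Rˣ} {n : ℕ} {g : ℕ → A} (h : IsHeckeFamily (q : R) n g)
    {x : A} (hx : x ∈ Algebra.adjoin R (g '' Set.Iio n)) :
    Commute (∑ t ∈ Finset.range n, murphySeq q g t) x := by
  refine Algebra.commute_of_mem_adjoin_of_forall_mem_commute hx ?_
  rintro _ ⟨j, hj, rfl⟩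
  exact (h.commute_sum_murphySeq hj).symm

end HeckeFamily

/-- The canonical projection of the free algebra onto `H_n(v_1,…,v_m;q)`. -/
def proj : FreeAlgebra k (Fin n) →ₐ[k] CH k m n v q :=
  RingQuot.mkAlgHom k (Rel k m n v q)

theorem proj_surjective : Function.Surjective (proj k m n v q) :=
  RingQuot.mkAlgHom_surjective k _

variable {k m n v q} in
theorem proj_eq_of_rel {x y : FreeAlgebra k (Fin n)} (h : Rel k m n v q x y) :
    proj k m n v q x = proj k m n v q y :=
  RingQuot.mkAlgHom_rel k h

theorem proj_ι [NeZero n] (i : Fin n) :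
    proj k m n v q (FreeAlgebra.ι k i) = gen k m n v q i := by
  rw [gen, Fin.cast_val_eq_self]
  rfl

theorem isHeckeFamily_gen [NeZero n] : IsHeckeFamily q n (gen k m n v q) where
  quad {i} hi hin := by
    simpa [proj_ι] using proj_eq_of_rel (Rel.quad (v := v) (q := q) ⟨i, hin⟩ hi)
  braid_zero hn := by
    simpa only [map_mul, proj_ι] using
      proj_eq_of_rel (Rel.braid0 (v := v) (q := q) ⟨0, by lia⟩ ⟨1, hn⟩ rfl rfl)
  comm {i j} hij hj := by
    simpa only [map_mul, proj_ι, Commute, SemiconjBy] using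
      proj_eq_of_rel (Rel.comm (v := v) (q := q) ⟨i, by lia⟩ ⟨j, hj⟩ hij)
  braid {i} hi hin := by
    simpa only [map_mul, proj_ι] using
      proj_eq_of_rel (Rel.braid (v := v) (q := q) ⟨i, by lia⟩ ⟨i + 1, hin⟩ hi rfl)

theorem adjoin_gen_image_Iio [NeZero n] :
    Algebra.adjoin k (gen k m n v q '' Set.Iio n) = ⊤ := by
  rw [eq_top_iff, ← (AlgHom.range_eq_top _).mpr (proj_surjective k m n v q), ← Algebra.map_top,
    ← FreeAlgebra.adjoin_range_ι, AlgHom.map_adjoin]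
  refine Algebra.adjoin_mono ?_
  rintro _ ⟨_, ⟨i, rfl⟩, rfl⟩
  exact ⟨i, i.isLt, (proj_ι k m n v q i).symm⟩

theorem murphySeq_gen [NeZero n] (hq : q ≠ 0) (t : ℕ) :
    murphySeq (Units.mk0 q hq) (gen k m n v q) t = murphyAux k m n v q t := by
  induction t with
  | zero => rfl
  | succ t ih =>
    rw [murphySeq, murphyAux, ih, Units.smul_def, Units.val_inv_eq_inv_val, Units.val_mk0]

theorem sum_murphy_eq_sum_murphySeq [NeZero n] (hq : q ≠ 0) :
    ∑ i : Fin n, murphy k m n v q i =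
      ∑ t ∈ Finset.range n, murphySeq (Units.mk0 q hq) (gen k m n v q) t := by
  simp only [murphySeq_gen, murphy, Fin.sum_univ_eq_sum_range (murphyAux k m n v q)]

/-- The element `c_n = L_1 + ⋯ + L_n` is central in the cyclotomic
Hecke algebra `H_n(v_1,…,v_m;q)`. -/
theorem sum_murphy_central [NeZero m] [NeZero n] (hq : q ≠ 0) (x : CH k m n v q) :
    (∑ i : Fin n, murphy k m n v q i) * x = x * ∑ i : Fin n, murphy k m n v q i := by
  rw [sum_murphy_eq_sum_murphySeq k m n v q hq]
  exact sum_murphy_central_general (isHeckeFamily_gen k m n v q)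
    (adjoin_gen_image_Iio k m n v q ▸ Algebra.mem_top)

end Cyclo
end
end
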